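/- arXiv:1802.03534 — 7 statements merged into one kernel-verified Lean document; each statement's English description precedes it below -/
import Mathlib

section
/- Let q = 2^s with s ≥ 2, let r = q⁴, and let α be a primitive element of GF(r). Define the Gaussian periods of order q+1 by η_i = ∑_{x ∈ C_i^{(q+1,r)}} (−1)^{Tr_{r/2}(x)} ∈ ℤ, where Tr_{r/2} is the trace from GF(r) to GF(2), for 0 ≤ i ≤ q. Then η_0 = −(q² − q + 1) and η_i = q − 1 for every i with 1 ≤ i ≤ q. -/
open scoped Classical

open Finset

/-!
For a character `ψ` invariant under `x ↦ x ^ q`, put `S a = ∑ x, ψ (a * x ^ (q + 1))`. As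
`x ^ (q + 1) = x * x ^ q` is a quadratic form over the subfield of order `q`, Weil's squaring trick
gives `S a * S (-a) = |E|` whenever the linearised equation `a * u + (a * u ^ q) ^ q = 0` has only
the solution `0`. Let `|E| = q ^ (2 * m)` with `q * m` even. Then this happens as soon as `a` is not
a `(q + 1)`-th power; moreover `-1` is a `(q + 1)`-th power, so `S (-a) = S a = ±(-q) ^ m`.
On the other hand `S (α ^ i) = 1 + (q + 1) * η_i`, and `η_i` is an algebraic integer. As
`-q ≡ 1` modulo `q + 1`, which does not divide `2`, the sign is `+`; this gives `η_i` for all `i`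
not divisible by `q + 1`, and `η_0` follows from `1 + ∑ η_i = ∑ x, ψ x = 0`.
-/

section Integrality

open Polynomial

lemma dvd_of_algebraMap_eq_algebraMap_mul {A S : Type*} [CommRing A] [IsDomain A]
    [IsIntegrallyClosed A] [CommRing S] [IsDomain S] [Algebra A S] [Module.IsTorsionFree A S]
    {a b : A} {z : S} (hz : IsIntegral A z) (h : algebraMap A S a = algebraMap A S b * z) :
    b ∣ a := by
  rcases eq_or_ne b 0 with rfl | hb
  · simp_all
  obtain ⟨Q, hQ⟩ : minpoly A z ∣ C b * X - C a :=
    minpoly.isIntegrallyClosed_dvd hz (by simp [h])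
  have hdeg : (C b * X - C a).natDegree = 1 := by
    rw [natDegree_sub_C, natDegree_C_mul_X b hb]
  have hQ0 : Q ≠ 0 := by
    rintro rfl
    simp [hQ] at hdeg
  rw [hQ, (minpoly.monic hz).natDegree_mul' hQ0] at hdeg
  have hpos := minpoly.natDegree_pos hz
  obtain ⟨c, rfl⟩ := natDegree_eq_zero.1 (show Q.natDegree = 0 by omega)
  have hlead : (minpoly A z).coeff 1 = 1 := by
    simpa [show (minpoly A z).natDegree = 1 by omega] using (minpoly.monic hz).coeff_natDegree
  have hbc : b = c := by simpa [hlead] using congr_arg (coeff · 1) hQ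
  have hac : -a = (minpoly A z).coeff 0 * c := by simpa using congr_arg (coeff · 0) hQ
  exact hbc ▸ (dvd_neg.1 ⟨_, hac.trans (mul_comm _ _)⟩)

lemma isIntegral_addChar_apply {A R : Type*} [AddGroup A] [Finite A] [CommRing R]
    (ψ : AddChar A R) (x : A) : IsIntegral ℤ (ψ x) := by
  refine IsIntegral.of_pow (Nat.card_pos (α := A)) ?_
  rw [← AddChar.map_nsmul_eq_pow, card_nsmul_eq_zero', AddChar.map_zero_eq_one]
  exact isIntegral_one

lemma eq_neg_geom_sum_of_sq_eq {R : Type*} [CommRing R] [IsDomain R] [CharZero R] {q m : ℕ}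
    (hq : 1 < q) {η : R} (hη : IsIntegral ℤ η) (h : (1 + (q + 1) * η) ^ 2 = ((-q : R) ^ m) ^ 2) :
    η = -∑ j ∈ range m, (-q : R) ^ j := by
  have hgeom := geom_sum_mul (-q : R) m
  rcases sq_eq_sq_iff_eq_or_eq_neg.1 h with hpos | hneg
  · refine mul_left_cancel₀ (Nat.cast_add_one_ne_zero q) ?_
    linear_combination hpos - hgeom
  · have hint : IsIntegral ℤ (∑ j ∈ range m, (-q : R) ^ j - η) :=
      (IsIntegral.sum _ fun j _ => (isIntegral_natCast q).neg.pow j).sub hη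
    have hdvd : (q + 1 : ℤ) ∣ 2 := dvd_of_algebraMap_eq_algebraMap_mul hint (by
      simp only [algebraMap_int_eq, eq_intCast, Int.cast_ofNat, Int.cast_add, Int.cast_natCast,
        Int.cast_one]
      linear_combination hneg + hgeom)
    have := Int.le_of_dvd two_pos hdvd
    omega

end Integrality

section CyclicGroup

variable {G : Type*} [CommGroup G] [Finite G] {N : ℕ}

lemma exists_pow_eq_iff_pow_eq_one [IsCyclic G] {M : ℕ} (hNM : N * M = Nat.card G) (x : G) :
    (∃ y, y ^ N = x) ↔ x ^ M = 1 := by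
  have hpos : 0 < N * M := hNM ▸ Nat.card_pos
  have hle : (powMonoidHom N : G →* G).range ≤ (powMonoidHom M : G →* G).ker := by
    rintro _ ⟨y, rfl⟩
    simp [← pow_mul, hNM]
  have hcard :
      Nat.card (powMonoidHom M : G →* G).ker ≤ Nat.card (powMonoidHom N : G →* G).range := by
    rw [IsCyclic.card_powMonoidHom_ker, IsCyclic.card_powMonoidHom_range, ← hNM,
      Nat.gcd_mul_left_left, Nat.gcd_mul_right_left,
      Nat.mul_div_cancel_left _ (Nat.pos_of_mul_pos_right hpos)]
  exact SetLike.ext_iff.1 (Subgroup.eq_of_le_of_card_ge hle hcard) x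

lemma card_filter_pow_eq_pow {G : Type*} [CommGroup G] [Fintype G] [IsCyclic G]
    (hN : N ∣ Nat.card G) (v : G) : #{u : G | u ^ N = v ^ N} = N := by
  calc #{u : G | u ^ N = v ^ N} = #{u : G | u ^ N = 1} :=
        MonoidHom.card_fiber_eq_of_mem_range (powMonoidHom N : G →* G) ⟨v, rfl⟩ ⟨1, one_pow N⟩
    _ = Nat.card (powMonoidHom N : G →* G).ker := (Nat.subtype_card _ (by simp)).symm
    _ = N := by rw [IsCyclic.card_powMonoidHom_ker, Nat.gcd_eq_right hN]

lemma modEq_of_pow_mul_pow_eq_pow_mul_pow {g : G} (hg : ∀ x, x ∈ Subgroup.zpowers g)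
    (hN : N ∣ Nat.card G) {i j : ℕ} {u v : G}
    (h : g ^ i * u ^ N = g ^ j * v ^ N) : i ≡ j [MOD N] := by
  obtain ⟨k, rfl⟩ := (mem_powers_iff_mem_zpowers (x := g)).2 (hg u)
  obtain ⟨l, rfl⟩ := (mem_powers_iff_mem_zpowers (x := g)).2 (hg v)
  simp only [← pow_mul, ← pow_add, pow_eq_pow_iff_modEq,
    orderOf_eq_card_of_forall_mem_zpowers hg] at h
  simpa [Nat.ModEq] using h.of_dvd hN

lemma exists_lt_pow_mul_pow_eq {g : G} (hg : ∀ x, x ∈ Subgroup.zpowers g) (hN : 0 < N) (x : G) :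
    ∃ i < N, ∃ u, g ^ i * u ^ N = x := by
  obtain ⟨k, rfl⟩ := (mem_powers_iff_mem_zpowers (x := g)).2 (hg x)
  exact ⟨k % N, Nat.mod_lt k hN, g ^ (k / N), by
    simp only [← pow_mul, ← pow_add, mul_comm _ N, Nat.mod_add_div]⟩

end CyclicGroup

/-- The class `a ^ i ⟨a ^ N⟩` of a monoid. When `a` is a primitive element of a finite field `E` and
`N ∣ |E| - 1`, it is the cyclotomic class `C_i` of order `N`; every index `i : ℕ` is allowed, with
`C_i` depending only on `i` modulo `N`. -/
def cyclotomicClass {M : Type*} [Monoid M] (a : M) (N i : ℕ) : Set M :=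
  {x | ∃ j : ℕ, x = a ^ i * (a ^ N) ^ j}

/-- The Gaussian period `η_i` of order `N` attached to `ψ`: the sum of the additive character `ψ`
over the cyclotomic class `C_i` of order `N` defined by `a`. -/
noncomputable def gaussianPeriod {E R : Type*} [Ring E] [Fintype E] [CommSemiring R]
    (ψ : AddChar E R) (a : E) (N i : ℕ) : R :=
  ∑ x ∈ (cyclotomicClass a N i).toFinset, ψ x

lemma sum_eq_zero_add_sum_units {E M : Type*} [GroupWithZero E] [Fintype E] [AddCommMonoid M]
    (f : E → M) : ∑ x, f x = f 0 + ∑ u : Eˣ, f u := by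
  rw [Fintype.sum_eq_add_sum_subtype_ne f 0, ← unitsEquivNeZero.sum_comp]
  rfl

section Classes

lemma not_exists_pow_eq_pow {E : Type*} [Field E] [Finite E] {α : Eˣ}
    (hα : ∀ u, u ∈ Subgroup.zpowers α) {N i : ℕ} (hN : N ∣ Nat.card Eˣ) (hi : ¬ N ∣ i) :
    ¬ ∃ v : E, v ^ N = (α : E) ^ i := by
  rintro ⟨v, hv⟩
  have hv0 : v ≠ 0 := by
    rintro rfl
    rw [zero_pow (Nat.pos_of_dvd_of_pos hN Nat.card_pos).ne'] at hv
    exact pow_ne_zero i α.ne_zero hv.symm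
  lift v to Eˣ using hv0.isUnit
  have hunits : α ^ i * 1 ^ N = α ^ 0 * v ^ N := Units.ext (by simp [hv])
  exact hi (Nat.modEq_zero_iff_dvd.1 (modEq_of_pow_mul_pow_eq_pow_mul_pow hα hN hunits))

lemma mem_cyclotomicClass_iff {E : Type*} [Field E] [Finite E] {α : Eˣ}
    (hα : ∀ u, u ∈ Subgroup.zpowers α) {N i : ℕ} {x : E} :
    x ∈ cyclotomicClass (α : E) N i ↔ ∃ u : Eˣ, ((α ^ i * u ^ N : Eˣ) : E) = x := by
  constructor
  · rintro ⟨j, rfl⟩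
    exact ⟨α ^ j, by push_cast; rw [pow_right_comm]⟩
  · rintro ⟨u, rfl⟩
    obtain ⟨k, rfl⟩ := (mem_powers_iff_mem_zpowers (x := α)).2 (hα u)
    exact ⟨k, by push_cast; rw [pow_right_comm]⟩

variable {E R : Type*} [Field E] [Fintype E] [CommSemiring R] {α : Eˣ} {N : ℕ}

lemma sum_pow_mul_pow_eq (hα : ∀ u, u ∈ Subgroup.zpowers α) (hN : N ∣ Nat.card Eˣ)
    (ψ : AddChar E R) (i : ℕ) :
    ∑ x : E, ψ (α ^ i * x ^ N) = 1 + N * gaussianPeriod ψ (α : E) N i := by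
  have himage : univ.image (fun u : Eˣ => ((α ^ i * u ^ N : Eˣ) : E)) =
      (cyclotomicClass (α : E) N i).toFinset := by
    ext x
    simp [mem_cyclotomicClass_iff hα]
  have hfiber (v : Eˣ) : #{u : Eˣ | ((α ^ i * u ^ N : Eˣ) : E) = (α ^ i * v ^ N : Eˣ)} = N := by
    convert card_filter_pow_eq_pow hN v using 3
    rw [Units.val_inj, mul_right_inj]
  have hunits : ∑ u : Eˣ, ψ (α ^ i * u ^ N : Eˣ) = N * gaussianPeriod ψ (α : E) N i := by
    rw [sum_comp ψ fun u : Eˣ => ((α ^ i * u ^ N : Eˣ) : E), gaussianPeriod, mul_sum, ← himage]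
    refine sum_congr rfl fun x hx => ?_
    obtain ⟨v, -, rfl⟩ := mem_image.1 hx
    rw [hfiber, nsmul_eq_mul]
  rw [sum_eq_zero_add_sum_units, ← hunits]
  simp [(Nat.pos_of_dvd_of_pos hN Nat.card_pos).ne']

lemma one_add_sum_gaussianPeriod (hα : ∀ u, u ∈ Subgroup.zpowers α) (hN : N ∣ Nat.card Eˣ)
    (ψ : AddChar E R) : 1 + ∑ i ∈ range N, gaussianPeriod ψ (α : E) N i = ∑ x, ψ x := by
  have hdisj : ((range N : Finset ℕ) : Set ℕ).PairwiseDisjoint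
      fun i => (cyclotomicClass (α : E) N i).toFinset := by
    intro i hi j hj hij
    refine Finset.disjoint_left.2 fun x hxi hxj => hij ?_
    obtain ⟨u, rfl⟩ := (mem_cyclotomicClass_iff hα).1 (Set.mem_toFinset.1 hxi)
    obtain ⟨v, huv⟩ := (mem_cyclotomicClass_iff hα).1 (Set.mem_toFinset.1 hxj)
    exact (modEq_of_pow_mul_pow_eq_pow_mul_pow hα hN (Units.val_inj.1 huv.symm)).eq_of_lt_of_lt
      (mem_range.1 hi) (mem_range.1 hj)
  have hunion : (range N).biUnion (fun i => (cyclotomicClass (α : E) N i).toFinset) =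
      univ.map ⟨_, Units.val_injective⟩ := by
    ext x
    simp only [mem_biUnion, mem_range, Set.mem_toFinset, mem_cyclotomicClass_iff hα, mem_map,
      mem_univ, true_and, Function.Embedding.coeFn_mk]
    constructor
    · rintro ⟨i, -, u, rfl⟩
      exact ⟨_, rfl⟩
    · rintro ⟨w, rfl⟩
      obtain ⟨i, hi, u, rfl⟩ :=
        exists_lt_pow_mul_pow_eq hα (Nat.pos_of_dvd_of_pos hN Nat.card_pos) w
      exact ⟨i, hi, u, rfl⟩
  simp only [gaussianPeriod]
  rw [← sum_biUnion hdisj, hunion, sum_map, sum_eq_zero_add_sum_units ψ, AddChar.map_zero_eq_one]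
  rfl

lemma isIntegral_gaussianPeriod {E R : Type*} [Ring E] [Fintype E] [CommRing R] (ψ : AddChar E R)
    (a : E) (N i : ℕ) : IsIntegral ℤ (gaussianPeriod ψ a N i) :=
  IsIntegral.sum _ fun x _ => isIntegral_addChar_apply ψ x

end Classes

-- The product is the sum over `x, u` of `ψ (a * (x + u) * φ (x + u) - a * x * φ x)`, in which
-- invariance of `ψ` turns the part depending on `x` into the linear character of `φ x` with
-- coefficient `a * u + φ (a * φ u)`.
lemma sum_mul_sum_neg_eq_card {E R : Type*} [Field E] [Fintype E] [CommRing R] [IsDomain R]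
    {ψ : AddChar E R} (hψ : ψ ≠ 1) (φ : E ≃+* E) (hψφ : ∀ x, ψ (φ x) = ψ x) {a : E}
    (ha : ∀ u, a * u + φ (a * φ u) = 0 → u = 0) :
    (∑ x, ψ (a * (x * φ x))) * ∑ x, ψ (-a * (x * φ x)) = Fintype.card E := by
  have hterm (x u : E) : ψ (a * ((x + u) * φ (x + u))) * ψ (-a * (x * φ x)) =
      ψ (a * (u * φ u)) * ψ (φ x * (a * u + φ (a * φ u))) := by
    have htwist : ψ (φ x * φ (a * φ u)) = ψ (x * (a * φ u)) := by rw [← map_mul, hψφ]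
    rw [mul_add (φ x), AddChar.map_add_eq_mul ψ (φ x * _), htwist]
    simp only [← AddChar.map_add_eq_mul, map_add]
    congr 1
    ring
  have hlinear (c : E) : ∑ x, ψ (φ x * c) = if c = 0 then (Fintype.card E : R) else 0 := by
    rw [φ.bijective.sum_comp fun y => ψ (y * c), AddChar.sum_mulShift c (.of_ne_one hψ),
      Nat.cast_ite, Nat.cast_zero]
  calc (∑ x, ψ (a * (x * φ x))) * ∑ x, ψ (-a * (x * φ x))
    _ = ∑ x, ∑ u, ψ (a * ((x + u) * φ (x + u))) * ψ (-a * (x * φ x)) := by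
        rw [mul_comm, sum_mul_sum]
        refine sum_congr rfl fun x _ => ?_
        rw [← Equiv.sum_comp (Equiv.addLeft x)]
        simp only [Equiv.coe_addLeft, mul_comm]
    _ = ∑ u, ψ (a * (u * φ u)) * ∑ x, ψ (φ x * (a * u + φ (a * φ u))) := by
        simp only [hterm, mul_sum]
        exact sum_comm
    _ = ∑ u : E, if u = 0 then (Fintype.card E : R) else 0 := by
        refine sum_congr rfl fun u _ => ?_
        rcases eq_or_ne u 0 with rfl | hu
        · simp
        · rw [hlinear, if_neg (mt (ha u) hu), mul_zero, if_neg hu]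
    _ = Fintype.card E := by simp

section FiniteField

variable {E : Type*} [Field E] [Fintype E] {q n m : ℕ}

lemma exists_pow_eq_iff_pow_eq_one_of_ne_zero {E : Type*} [Field E] [Finite E] {N M : ℕ}
    (hNM : N * M = Nat.card Eˣ) {x : E} (hx : x ≠ 0) : (∃ y, y ^ N = x) ↔ x ^ M = 1 := by
  have hN : N ≠ 0 := by
    rintro rfl
    simpa using hNM.trans_ne Nat.card_pos.ne'
  lift x to Eˣ using hx.isUnit
  rw [← Units.val_pow_eq_pow_val, Units.val_eq_one, ← exists_pow_eq_iff_pow_eq_one hNM]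
  constructor
  · rintro ⟨y, hy⟩
    have hy0 : y ≠ 0 := by
      rintro rfl
      simp [hN, hx.symm] at hy
    exact ⟨Units.mk0 y hy0, Units.ext (by simpa using hy)⟩
  · rintro ⟨y, rfl⟩
    exact ⟨y, by push_cast; rfl⟩

lemma one_lt_and_ne_zero_of_card_eq_pow (hE : Fintype.card E = q ^ n) : 1 < q ∧ n ≠ 0 := by
  have hcard : 1 < q ^ n := hE ▸ Fintype.one_lt_card
  constructor
  · by_contra! hq
    exact hcard.not_ge (pow_le_one₀ q.zero_le hq)
  · rintro rfl
    simp at hcard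

lemma exists_ringEquiv_eq_pow (hE : Fintype.card E = q ^ n) :
    ∃ φ : E ≃+* E, ∀ x, φ x = x ^ q := by
  obtain ⟨p, hp, k, hprime, hcard⟩ := FiniteField.card' E
  have : Fact p.Prime := ⟨hprime⟩
  have hdvd : q ∣ p ^ (k : ℕ) :=
    hcard ▸ hE ▸ dvd_pow_self q (one_lt_and_ne_zero_of_card_eq_pow hE).2
  obtain ⟨s, -, rfl⟩ := (Nat.dvd_prime_pow hprime).1 hdvd
  exact ⟨iterateFrobeniusEquiv E p s, iterateFrobeniusEquiv_def E p s⟩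

lemma succ_mul_pred_mul_geom_sum (hE : Fintype.card E = q ^ (2 * m)) :
    (q + 1) * ((q - 1) * ∑ j ∈ range m, (q ^ 2) ^ j) = Nat.card Eˣ := by
  have hq := (one_lt_and_ne_zero_of_card_eq_pow hE).1
  rw [← mul_assoc, ← Nat.sq_sub_sq, mul_comm, one_pow,
    geom_sum_mul_of_one_le (Nat.one_le_pow _ _ (zero_lt_one.trans hq)),
    ← pow_mul, ← hE, Nat.card_eq_fintype_card, Fintype.card_units]

lemma neg_one_pow_geom_sum (hE : Fintype.card E = q ^ (2 * m)) (hqm : Even (q * m)) :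
    (-1 : E) ^ (∑ j ∈ range m, (q ^ 2) ^ j) = 1 := by
  rcases Nat.even_or_odd q with hq | hq
  · have hcard : Even (Fintype.card E) :=
      hE ▸ hq.pow_of_ne_zero (one_lt_and_ne_zero_of_card_eq_pow hE).2
    have hneg : (-1 : E) = 1 := by rw [← FiniteField.pow_card (-1 : E), hcard.neg_one_pow]
    rw [hneg, one_pow]
  · have hm : Even m := (Nat.even_mul.1 hqm).resolve_left (Nat.not_even_iff_odd.2 hq)
    refine Even.neg_one_pow ((even_sum_iff_even_card_odd _).2 ?_)
    simpa [filter_true_of_mem fun j _ => (hq.pow (n := 2)).pow (n := j)] using hm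

lemma exists_pow_succ_eq_neg_one (hE : Fintype.card E = q ^ (2 * m)) (hqm : Even (q * m)) :
    ∃ v : E, v ^ (q + 1) = -1 := by
  rw [exists_pow_eq_iff_pow_eq_one_of_ne_zero (succ_mul_pred_mul_geom_sum hE) (by simp), mul_comm,
    pow_mul, neg_one_pow_geom_sum hE hqm, one_pow]

lemma eq_zero_of_mul_add_pow_eq_zero (hE : Fintype.card E = q ^ (2 * m)) (hqm : Even (q * m))
    {a : E} (ha : ¬ ∃ v, v ^ (q + 1) = a) {u : E} (hu : a * u + (a * u ^ q) ^ q = 0) : u = 0 := by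
  by_contra hu0
  have ha0 : a ≠ 0 := by
    rintro rfl
    exact ha ⟨0, by simp⟩
  have hb0 : a * u ^ (q + 1) ≠ 0 := mul_ne_zero ha0 (pow_ne_zero _ hu0)
  have hb : (a * u ^ (q + 1)) ^ (q - 1) = -1 := by
    refine mul_right_cancel₀ hb0 ?_
    rw [← pow_succ, Nat.sub_add_cancel (one_lt_and_ne_zero_of_card_eq_pow hE).1.le]
    linear_combination u ^ q * hu
  obtain ⟨w, hw⟩ : ∃ w, w ^ (q + 1) = a * u ^ (q + 1) := by
    rw [exists_pow_eq_iff_pow_eq_one_of_ne_zero (succ_mul_pred_mul_geom_sum hE) hb0, pow_mul, hb,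
      neg_one_pow_geom_sum hE hqm]
  exact ha ⟨w / u, by rw [div_pow, hw, mul_div_cancel_right₀ _ (pow_ne_zero _ hu0)]⟩

lemma sq_sum_mul_pow_succ {R : Type*} [CommRing R] [IsDomain R]
    (hE : Fintype.card E = q ^ (2 * m)) (hqm : Even (q * m)) {ψ : AddChar E R} (hψ : ψ ≠ 1)
    (hψq : ∀ x, ψ (x ^ q) = ψ x) {a : E} (ha : ¬ ∃ v, v ^ (q + 1) = a) :
    (∑ x, ψ (a * x ^ (q + 1))) ^ 2 = ((-q : R) ^ m) ^ 2 := by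
  obtain ⟨φ, hφ⟩ := exists_ringEquiv_eq_pow hE
  obtain ⟨v, hv⟩ := exists_pow_succ_eq_neg_one hE hqm
  have hv0 : v ≠ 0 := by
    rintro rfl
    simp at hv
  have hneg : ∑ x, ψ (-a * x ^ (q + 1)) = ∑ x, ψ (a * x ^ (q + 1)) := by
    rw [← Equiv.sum_comp (Equiv.mulLeft₀ v hv0) fun x => ψ (a * x ^ (q + 1))]
    simp [mul_pow, hv]
  have hprod := sum_mul_sum_neg_eq_card hψ φ (by simpa only [hφ] using hψq) (a := a)
    fun u hu => eq_zero_of_mul_add_pow_eq_zero hE hqm ha (by simpa only [hφ] using hu)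
  simp only [hφ, ← pow_succ'] at hprod
  rw [hneg, ← sq, hE] at hprod
  rw [hprod, ← pow_mul, mul_comm m, (even_two_mul m).neg_pow, Nat.cast_pow]

end FiniteField

section TraceCharacter

variable {K E R : Type*} [Field K] [Field E] [Algebra K E] [CommMonoid R]

/-- The additive character `ψ ∘ Tr_{E/K}` of `E` obtained from an additive character `ψ` of `K`.
For `K = ZMod 2` and `ψ a = (-1) ^ a` it is the sign `(-1) ^ Tr x`. -/
noncomputable def traceChar (E : Type*) [Field E] [Algebra K E] (ψ : AddChar K R) : AddChar E R :=
  ψ.compAddMonoidHom (Algebra.trace K E).toAddMonoidHom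

lemma traceChar_ne_one [FiniteDimensional K E] [Algebra.IsSeparable K E] {ψ : AddChar K R}
    (hψ : ψ ≠ 1) : traceChar E ψ ≠ 1 := by
  obtain ⟨a, ha⟩ := AddChar.ne_one_iff.1 hψ
  obtain ⟨x, rfl⟩ := Algebra.trace_surjective K E a
  exact AddChar.ne_one_iff.2 ⟨x, ha⟩

lemma traceChar_pow_card_pow [Fintype K] [Algebra.IsAlgebraic K E] (ψ : AddChar K R) (s : ℕ)
    (x : E) : traceChar E ψ (x ^ Fintype.card K ^ s) = traceChar E ψ x := by
  have htrace := Algebra.trace_eq_of_algEquiv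
    ((FiniteField.frobeniusAlgEquivOfAlgebraic K E) ^ s) x
  rw [AlgEquiv.coe_pow, FiniteField.coe_frobeniusAlgEquivOfAlgebraic_iterate] at htrace
  exact congr_arg ψ htrace

end TraceCharacter

theorem gaussian_periods_of_order_q_add_one_general {E R : Type*} [Field E] [Fintype E]
    [CommRing R] [IsDomain R] [CharZero R] {q m : ℕ} (hE : Fintype.card E = q ^ (2 * m))
    (hqm : Even (q * m)) {ψ : AddChar E R} (hψ : ψ ≠ 1) (hψq : ∀ x, ψ (x ^ q) = ψ x) {α : Eˣ}
    (hα : ∀ u, u ∈ Subgroup.zpowers α) :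
    gaussianPeriod ψ (α : E) (q + 1) 0 = -∑ j ∈ range (m + 1), (-q : R) ^ j ∧
      ∀ i, ¬ q + 1 ∣ i → gaussianPeriod ψ (α : E) (q + 1) i = -∑ j ∈ range m, (-q : R) ^ j := by
  have hN : q + 1 ∣ Nat.card Eˣ := Dvd.intro _ (succ_mul_pred_mul_geom_sum hE)
  have hnonzero : ∀ i, ¬ q + 1 ∣ i →
      gaussianPeriod ψ (α : E) (q + 1) i = -∑ j ∈ range m, (-q : R) ^ j := by
    intro i hi
    refine eq_neg_geom_sum_of_sq_eq (one_lt_and_ne_zero_of_card_eq_pow hE).1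
      (isIntegral_gaussianPeriod ψ _ _ _) ?_
    rw [← Nat.cast_succ, ← sum_pow_mul_pow_eq hα hN,
      sq_sum_mul_pow_succ hE hqm hψ hψq (not_exists_pow_eq_pow hα hN hi)]
  refine ⟨?_, hnonzero⟩
  have hsum := one_add_sum_gaussianPeriod hα hN ψ
  have hrest : ∀ i ∈ range q,
      gaussianPeriod ψ (α : E) (q + 1) (i + 1) = -∑ j ∈ range m, (-q : R) ^ j := fun i hi =>
    hnonzero _ (Nat.not_dvd_of_pos_of_lt i.succ_pos (Nat.succ_lt_succ (mem_range.1 hi)))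
  rw [AddChar.sum_eq_zero_of_ne_one hψ, sum_range_succ', sum_congr rfl hrest, sum_const, card_range,
    nsmul_eq_mul] at hsum
  rw [geom_sum_succ]
  linear_combination hsum

/-- For q = 2^s (s ≥ 2) and r = q⁴, the Gaussian periods of order q+1 on
GF(r), η_i = ∑_{x ∈ C_i^{(q+1,r)}} (−1)^{Tr_{r/2}(x)}, satisfy η₀ = −(q²−q+1) and
η_i = q−1 for 1 ≤ i ≤ q. -/
theorem gaussian_periods_of_order_q_add_one {q s : ℕ} (hs : 2 ≤ s) (hq : q = 2 ^ s)
    (E : Type) [Field E] [Fintype E] [Algebra (ZMod 2) E]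
    (hE : Fintype.card E = q ^ 4)
    (α : Eˣ) (hα : ∀ x : Eˣ, x ∈ Subgroup.zpowers α) :
    let Ci : ℕ → Set E := fun i => {x : E | ∃ j : ℕ, x = (α : E) ^ i * ((α : E) ^ (q + 1)) ^ j}
    let η : ℕ → ℤ := fun i =>
      ∑ x ∈ (Ci i).toFinset, (-1 : ℤ) ^ (Algebra.trace (ZMod 2) E x).val
    η 0 = -((q : ℤ) ^ 2 - q + 1) ∧ ∀ i, 1 ≤ i → i ≤ q → η i = (q : ℤ) - 1 := by
  let χ : AddChar (ZMod 2) ℤ := AddChar.zmodChar 2 neg_one_sq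
  have hχ : χ ≠ 1 := (AddChar.zmod_char_ne_one_iff 2 χ).2 (by decide)
  have hfrob (x : E) : traceChar E χ (x ^ q) = traceChar E χ x := by
    simpa only [hq, ZMod.card] using traceChar_pow_card_pow χ s x
  obtain ⟨hzero, hnonzero⟩ := gaussian_periods_of_order_q_add_one_general (m := 2) hE
    (even_two.mul_left q) (traceChar_ne_one hχ) hfrob hα
  refine ⟨hzero.trans ?_, fun i hi hiq =>
    (hnonzero i (Nat.not_dvd_of_pos_of_lt hi (Nat.lt_succ_of_le hiq))).trans ?_⟩
  · simp only [sum_range_succ, range_zero, sum_empty]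
    ring
  · simp only [sum_range_succ, range_zero, sum_empty]
    ring
end

section
/- Let q = 2^s with s ≥ 2 and r = q⁴. For every nonzero β ∈ GF(r), the number of x ∈ GF(r) with Tr_{r/q}(β x^{q²−1}) = 0 equals q² if β is a (q+1)-th power in GF(r)^*, and equals q³ + q² − q otherwise. -/
/-!
Write `F ⊂ K ⊂ E` with both steps quadratic, `Q = |K| = q ^ 2`, and `β = δ ^ 2`. The substitution
`x = δ z` turns `β x ^ (Q - 1)` into `b z ^ (Q - 1)` with `b = N_{E/K} δ ∈ K`, and in characteristic
two `Tr_{E/K} (z ^ (Q - 1)) = (Tr z) ^ 2 / N z`. The zero set is therefore stable under `Kˣ` and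
contains the `Q` elements of trace zero; every other zero is a unique `K`-multiple of some `w` with
`Tr_{E/K} w = 1` and `Tr_{K/F} (b / N w) = 0`.

The second condition says `N w = c b` for some `c ∈ F`, and since `N w = w ^ 2 - w` when `Tr w = 1`,
such `w` are the solutions of the Artin–Schreier equations `w ^ 2 - w = c b` with
`Tr_{K/𝔽₂} (c b) = 1`. Each has two solutions in `E`, because `Tr_{E/𝔽₂}` vanishes on `K`, and
`Tr_{K/𝔽₂} (c b) = Tr_{F/𝔽₂} (c Tr_{K/F} b)` equals `1` for no `c` if `Tr_{K/F} b = 0`, and for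
`q / 2` values of `c` otherwise. Finally `Tr_{K/F} b = 0` means `b ∈ F`, that is
`δ ^ ((q ^ 2 + 1) (q - 1)) = 1`, that is `δ`, equivalently `β`, is a `(q + 1)`-th power.
-/

open Module

section Counting

lemma ncard_preimage_eq_card_ker_mul_ncard {G H : Type*} [AddGroup G] [AddGroup H]
    (f : G →+ H) {T : Set H} (hT : T ⊆ Set.range f) :
    (f ⁻¹' T).ncard = Nat.card f.ker * T.ncard := by
  have hlift : ∀ t ∈ T, ∃ g, f g = t := hT
  choose! s hs using hlift
  have hinj : Set.InjOn (fun p : G × H ↦ p.1 + s p.2) ((f.ker : Set G) ×ˢ T) := by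
    rintro ⟨g, t⟩ ⟨hg, ht⟩ ⟨g', t'⟩ ⟨hg', ht'⟩ hadd
    simp only [SetLike.mem_coe, AddMonoidHom.mem_ker] at hg hg' ht ht' hadd
    have htt' : t = t' := by simpa [hg, hg', hs _ ht, hs _ ht'] using congrArg f hadd
    subst htt'
    simpa using hadd
  have himage : f ⁻¹' T = (fun p : G × H ↦ p.1 + s p.2) '' ((f.ker : Set G) ×ˢ T) := by
    ext x
    constructor
    · intro hx
      exact ⟨(x - s (f x), f x), ⟨by simp [AddMonoidHom.mem_ker, hs _ hx], hx⟩, by simp⟩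
    · rintro ⟨⟨g, t⟩, ⟨hg, ht⟩, rfl⟩
      simp only [SetLike.mem_coe, AddMonoidHom.mem_ker] at hg ht
      simpa [hg, hs _ ht] using ht
  rw [himage, hinj.ncard_image, Set.ncard_prod, ← Nat.card_coe_set_eq]
  rfl

variable {k V : Type*} [Field k] [AddCommGroup V] [Module k V]

lemma card_mul_ncard_fiber_eq_card {f : V →ₗ[k] k} (hf : f ≠ 0) (a : k) :
    Nat.card k * {v | f v = a}.ncard = Nat.card V := by
  have hsurj : Function.Surjective f.toAddMonoidHom := LinearMap.surjective hf
  have hfiber := ncard_preimage_eq_card_ker_mul_ncard f.toAddMonoidHom (T := {a})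
    (hsurj.range_eq ▸ Set.subset_univ _)
  have htotal := ncard_preimage_eq_card_ker_mul_ncard f.toAddMonoidHom (T := Set.univ)
    hsurj.range_eq.superset
  rw [Set.ncard_singleton, mul_one] at hfiber
  rw [Set.preimage_univ, Set.ncard_univ, Set.ncard_univ, ← hfiber, mul_comm] at htotal
  exact htotal.symm

lemma ncard_sdiff_ker_eq_mul_ncard (f : V →ₗ[k] k) {S : Set V}
    (hS : ∀ (c : kˣ), ∀ v ∈ S, c • v ∈ S) :
    (S \ {v | f v = 0}).ncard = (Nat.card k - 1) * {v ∈ S | f v = 1}.ncard := by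
  have hinj : Function.Injective
      (fun p : kˣ × {v ∈ S | f v = 1} ↦ p.1 • (p.2 : V)) := by
    rintro ⟨c, v, _, hv⟩ ⟨c', v', _, hv'⟩ hsmul
    have hcc' : c = c' := by
      simpa [Units.smul_def, hv, hv', Units.ext_iff] using congrArg f hsmul
    subst hcc'
    simpa using hsmul
  have hrange : Set.range (fun p : kˣ × {v ∈ S | f v = 1} ↦ p.1 • (p.2 : V)) =
      S \ {v | f v = 0} := by
    ext x
    constructor
    · rintro ⟨⟨c, v, hvS, hv⟩, rfl⟩
      exact ⟨hS c v hvS, by simp [Units.smul_def, hv]⟩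
    · rintro ⟨hxS, hx⟩
      let c : kˣ := Units.mk0 (f x) hx
      have hcx : f (c⁻¹ • x) = 1 := by simp [c, Units.smul_def, show f x ≠ 0 from hx]
      exact ⟨(c, ⟨c⁻¹ • x, hS _ _ hxS, hcx⟩), by simp⟩
  rw [← hrange, ← Nat.card_coe_set_eq, Nat.card_range_of_injective hinj, Nat.card_prod,
    Nat.card_units, Nat.card_coe_set_eq]

end Counting

section Cyclic

lemma exists_pow_eq_iff_pow_eq_one_of_mul_eq_card {G : Type*} [CommGroup G] [IsCyclic G]
    [Finite G] {m n : ℕ} (hmn : m * n = Nat.card G) (x : G) : (∃ y, y ^ m = x) ↔ x ^ n = 1 := by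
  have hm : 0 < m := Nat.pos_of_mul_pos_right (hmn ▸ Nat.card_pos)
  have hle : (powMonoidHom m : G →* G).range ≤ (powMonoidHom n).ker := by
    rintro _ ⟨y, rfl⟩
    simp [MonoidHom.mem_ker, ← pow_mul, hmn]
  have heq : (powMonoidHom m : G →* G).range = (powMonoidHom n).ker := by
    refine Subgroup.eq_of_le_of_card_ge hle (le_of_eq ?_)
    rw [IsCyclic.card_powMonoidHom_ker, IsCyclic.card_powMonoidHom_range, ← hmn,
      Nat.gcd_mul_left_left, Nat.gcd_mul_right_left, Nat.mul_div_cancel_left n hm]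
  simpa [MonoidHom.mem_ker] using SetLike.ext_iff.mp heq x

lemma exists_ne_zero_eq_pow_iff_pow_eq_one {L : Type*} [Field L] [Finite L] {m n : ℕ}
    (hmn : m * n = Nat.card L - 1) {x : L} (hx : x ≠ 0) :
    (∃ y ≠ 0, x = y ^ m) ↔ x ^ n = 1 := by
  rw [← Nat.card_units] at hmn
  have hunits := exists_pow_eq_iff_pow_eq_one_of_mul_eq_card hmn (Units.mk0 x hx)
  simp only [Units.ext_iff, Units.val_pow_eq_pow_val, Units.val_mk0, Units.val_one] at hunits
  rw [← hunits]
  exact ⟨fun ⟨y, hy, h⟩ ↦ ⟨Units.mk0 y hy, h.symm⟩, fun ⟨y, h⟩ ↦ ⟨y, y.ne_zero, h.symm⟩⟩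

end Cyclic

lemma pow_card_eq_self_iff_mem_range_algebraMap {k L : Type*} [Field k] [Field L] [Finite L]
    [Algebra k L] {x : L} : x ^ Nat.card k = x ↔ x ∈ Set.range (algebraMap k L) := by
  have : Finite k := Finite.of_injective _ (algebraMap k L).injective
  have := Fintype.ofFinite k
  rw [Nat.card_eq_fintype_card]
  refine ⟨fun hx ↦ (IsGalois.mem_range_algebraMap_iff_fixed x).mpr fun σ ↦ ?_, ?_⟩
  · obtain ⟨i, rfl⟩ := (FiniteField.bijective_frobeniusAlgEquivOfAlgebraic_pow k L).surjective σ
    rw [AlgEquiv.coe_pow]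
    exact Function.IsFixedPt.iterate hx i
  · rintro ⟨a, rfl⟩
    rw [← map_pow, FiniteField.pow_card]

section ArtinSchreier

variable (k L : Type*) [Field k] [Fintype k] [Field L] [Algebra k L]

/-- The Artin–Schreier operator `x ↦ x ^ |k| - x` of an extension `L` of a finite field `k`,
as a `k`-linear endomorphism of `L`. -/
noncomputable def artinSchreier : L →ₗ[k] L :=
  (FiniteField.frobeniusAlgHom k L).toLinearMap - LinearMap.id

variable {k L}

lemma artinSchreier_apply (x : L) : artinSchreier k L x = x ^ Nat.card k - x := by
  simp [artinSchreier, Nat.card_eq_fintype_card]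

variable (k L)

lemma ker_artinSchreier [Finite L] : (artinSchreier k L).ker = 1 := by
  ext x
  rw [LinearMap.mem_ker, artinSchreier_apply, sub_eq_zero,
    pow_card_eq_self_iff_mem_range_algebraMap, Submodule.mem_one, Set.mem_range]

lemma card_ker_artinSchreier [Finite L] : Nat.card (artinSchreier k L).ker = Nat.card k := by
  rw [ker_artinSchreier, Submodule.one_eq_range]
  exact (Nat.card_congr (LinearEquiv.ofInjective (Algebra.linearMap k L)
    (algebraMap k L).injective).toEquiv).symm

lemma range_artinSchreier [Finite L] : (artinSchreier k L).range = (Algebra.trace k L).ker := by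
  refine Submodule.eq_of_le_of_finrank_eq ?_ ?_
  · rintro _ ⟨x, rfl⟩
    rw [LinearMap.mem_ker, artinSchreier_apply, map_sub, sub_eq_zero, Nat.card_eq_fintype_card]
    exact Algebra.trace_eq_of_algEquiv (FiniteField.frobeniusAlgEquivOfAlgebraic k L) x
  · have hk := (artinSchreier k L).finrank_range_add_finrank_ker
    have ht := (Algebra.trace k L).finrank_range_add_finrank_ker
    rw [ker_artinSchreier, Submodule.one_eq_span, finrank_span_singleton one_ne_zero] at hk
    rw [LinearMap.range_eq_top.mpr (Algebra.trace_surjective k L), finrank_top, finrank_self] at ht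
    lia

variable {k L} {K : Type*} [Field K] [Algebra k K] [Algebra K L] [IsScalarTower k K L] [Finite L]

lemma algebraMap_mem_range_artinSchreier (h : (finrank K L : k) = 0) (y : K) :
    algebraMap K L y ∈ (artinSchreier k L).range := by
  have : Finite K := Finite.of_injective _ (algebraMap K L).injective
  rw [range_artinSchreier, LinearMap.mem_ker, ← Algebra.trace_trace (S := K),
    Algebra.trace_algebraMap, map_nsmul, nsmul_eq_mul, h, zero_mul]

lemma algebraMap_trace_eq_pow_card_sub_self {y : K} {w : L}
    (h : artinSchreier k L w = algebraMap K L y) :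
    algebraMap k L (Algebra.trace k K y) = w ^ Nat.card K - w := by
  have : Finite K := Finite.of_injective _ (algebraMap K L).injective
  have hfrob (i : ℕ) : (w ^ Nat.card k - w) ^ Nat.card k ^ i =
      w ^ Nat.card k ^ (i + 1) - w ^ Nat.card k ^ i := by
    simpa [AlgHom.coe_pow, FiniteField.coe_frobeniusAlgHom, pow_iterate, ← pow_mul, pow_succ']
      using map_sub (FiniteField.frobeniusAlgHom k L ^ i) (w ^ Nat.card k) w
  rw [IsScalarTower.algebraMap_apply k K L, FiniteField.algebraMap_trace_eq_sum_pow, map_sum]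
  simp only [map_pow, ← h, artinSchreier_apply, hfrob]
  rw [Finset.sum_range_sub (fun i ↦ w ^ Nat.card k ^ i), ← natCard_eq_pow_finrank,
    pow_zero, pow_one]

end ArtinSchreier

lemma card_mul_ncard_trace_mul_eq {k L : Type*} [Field k] [Field L] [Finite L] [Algebra k L]
    {a : L} (ha : a ≠ 0) (t : k) :
    Nat.card k * {c : L | Algebra.trace k L (c * a) = t}.ncard = Nat.card L := by
  have hne : (Algebra.trace k L).comp (LinearMap.mulRight k a) ≠ 0 := by
    obtain ⟨x, hx⟩ := Algebra.trace_surjective k L 1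
    exact fun h ↦ by simpa [ha, hx] using DFunLike.congr_fun h (x / a)
  exact card_mul_ncard_fiber_eq_card hne t

section Quadratic

variable {K E : Type*} [Field K] [Field E] [Finite E] [Algebra K E]

lemma algebraMap_trace_of_finrank_eq_two (h : finrank K E = 2) (x : E) :
    algebraMap K E (Algebra.trace K E x) = x + x ^ Nat.card K := by
  simp [FiniteField.algebraMap_trace_eq_sum_pow, h, Finset.sum_range_succ]

lemma algebraMap_norm_of_finrank_eq_two (h : finrank K E = 2) (x : E) :
    algebraMap K E (Algebra.norm K x) = x ^ (Nat.card K + 1) := by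
  simp [FiniteField.algebraMap_norm_eq_prod_pow, h, Finset.prod_range_succ, pow_succ']

lemma trace_eq_zero_iff_mem_range_algebraMap [CharP E 2] (h : finrank K E = 2) {x : E} :
    Algebra.trace K E x = 0 ↔ x ∈ Set.range (algebraMap K E) := by
  rw [← pow_card_eq_self_iff_mem_range_algebraMap, ← map_eq_zero (algebraMap K E),
    algebraMap_trace_of_finrank_eq_two h, CharTwo.add_eq_zero, eq_comm]

lemma trace_div_eq_zero_iff_exists_smul_eq [CharP E 2] (h : finrank K E = 2) {b : E}
    (hb : b ≠ 0) {y : E} : Algebra.trace K E (b / y) = 0 ↔ ∃ c : K, c • b = y := by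
  rw [trace_eq_zero_iff_mem_range_algebraMap h]
  constructor
  · rintro ⟨c, hc⟩
    exact ⟨c⁻¹, by rw [Algebra.smul_def, map_inv₀, hc, inv_div, div_mul_cancel₀ _ hb]⟩
  · rintro ⟨c, rfl⟩
    exact ⟨c⁻¹, by rw [Algebra.smul_def, map_inv₀, div_mul_cancel_right₀ hb]⟩

lemma trace_pow_card_sub_one [CharP E 2] (h : finrank K E = 2) (z : E) :
    Algebra.trace K E (z ^ (Nat.card K - 1)) = Algebra.trace K E z ^ 2 / Algebra.norm K z := by
  have : Finite K := Finite.of_injective _ (algebraMap K E).injective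
  have hcard : 1 < Nat.card K := Finite.one_lt_card
  obtain rfl | hz := eq_or_ne z 0
  · simp [Nat.sub_ne_zero_of_lt hcard]
  have hpow : z ^ (Nat.card K - 1) = z ^ Nat.card K / z :=
    eq_div_of_mul_eq hz (pow_sub_one_mul Nat.card_pos.ne' z)
  have hfrob : (z ^ Nat.card K) ^ Nat.card K = z := by
    have := Fintype.ofFinite E
    rw [← pow_mul, ← sq, ← h, ← natCard_eq_pow_finrank, Nat.card_eq_fintype_card,
      FiniteField.pow_card]
  apply (algebraMap K E).injective
  rw [map_div₀, algebraMap_norm_of_finrank_eq_two h, algebraMap_trace_of_finrank_eq_two h,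
    map_pow, algebraMap_trace_of_finrank_eq_two h, CharTwo.add_sq, hpow, div_pow, hfrob]
  field_simp
  ring

lemma trace_eq_one_and_norm_eq_iff [Algebra (ZMod 2) K] [Algebra (ZMod 2) E]
    (h : finrank K E = 2) {w : E} {y : K} :
    Algebra.trace K E w = 1 ∧ Algebra.norm K w = y ↔
      artinSchreier (ZMod 2) E w = algebraMap K E y ∧ Algebra.trace (ZMod 2) K y = 1 := by
  have : CharP E 2 := charP_of_injective_algebraMap' (ZMod 2) 2
  have htrace : Algebra.trace K E w = 1 ↔ w ^ Nat.card K - w = 1 := by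
    rw [← (algebraMap K E).injective.eq_iff, algebraMap_trace_of_finrank_eq_two h, map_one,
      CharTwo.sub_eq_add, add_comm]
  have hnorm (hw : Algebra.trace K E w = 1) :
      algebraMap K E (Algebra.norm K w) = artinSchreier (ZMod 2) E w := by
    rw [algebraMap_norm_of_finrank_eq_two h, artinSchreier_apply, Nat.card_zmod, pow_succ,
      sub_eq_iff_eq_add.mp (htrace.mp hw), CharTwo.sub_eq_add]
    ring
  have htrace' (hw : artinSchreier (ZMod 2) E w = algebraMap K E y) :
      Algebra.trace (ZMod 2) K y = 1 ↔ Algebra.trace K E w = 1 := by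
    rw [htrace, ← algebraMap_trace_eq_pow_card_sub_self hw,
      ← (algebraMap (ZMod 2) E).injective.eq_iff, map_one]
  constructor
  · rintro ⟨hw, rfl⟩
    exact ⟨(hnorm hw).symm, (htrace' (hnorm hw).symm).mpr hw⟩
  · rintro ⟨hy, hy'⟩
    have hw := (htrace' hy).mp hy'
    exact ⟨hw, (algebraMap K E).injective ((hnorm hw).trans hy)⟩

lemma ncard_sq_mul_pow_card_sub_one_mem (h : finrank K E = 2) {δ : E} (hδ : δ ≠ 0) (S : Set E) :
    {x | δ ^ 2 * x ^ (Nat.card K - 1) ∈ S}.ncard =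
      {z | algebraMap K E (Algebra.norm K δ) * z ^ (Nat.card K - 1) ∈ S}.ncard := by
  have : Finite K := Finite.of_injective _ (algebraMap K E).injective
  have hcard : 2 + (Nat.card K - 1) = Nat.card K + 1 := by
    have : 0 < Nat.card K := Nat.card_pos
    lia
  have hpow : δ ^ 2 * δ ^ (Nat.card K - 1) = algebraMap K E (Algebra.norm K δ) := by
    rw [algebraMap_norm_of_finrank_eq_two h, ← pow_add, hcard]
  rw [← Set.ncard_preimage_of_injective_subset_range (mul_right_injective₀ hδ)
    ((mul_left_surjective₀ hδ).range_eq ▸ Set.subset_univ _)]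
  simp only [Set.preimage_ofPred_eq, mul_pow, ← mul_assoc, hpow]

end Quadratic

section Tower

variable {F K E : Type*} [Field F] [Field K] [Field E] [Finite E] [Algebra F K] [Algebra K E]

lemma ncard_trace_eq_one_and_trace_div_norm_eq_zero [Algebra (ZMod 2) F] [Algebra (ZMod 2) K]
    [Algebra (ZMod 2) E] (hFK : finrank F K = 2) (hKE : finrank K E = 2) {b : K} (hb : b ≠ 0) :
    {w : E | Algebra.trace K E w = 1 ∧ Algebra.trace F K (b / Algebra.norm K w) = 0}.ncard =
      2 * {c : F | Algebra.trace (ZMod 2) F (c * Algebra.trace F K b) = 1}.ncard := by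
  have : Finite K := Finite.of_injective _ (algebraMap K E).injective
  have : Finite F := Finite.of_injective _ (algebraMap F K).injective
  have : CharP K 2 := charP_of_injective_algebraMap' (ZMod 2) 2
  have htrace (c : F) : Algebra.trace (ZMod 2) K (c • b) =
      Algebra.trace (ZMod 2) F (c * Algebra.trace F K b) := by
    rw [← Algebra.trace_trace (S := F), map_smul, smul_eq_mul]
  let T : Set E := (fun c : F ↦ algebraMap K E (c • b)) ''
    {c | Algebra.trace (ZMod 2) F (c * Algebra.trace F K b) = 1}
  have hpreimage : {w : E | Algebra.trace K E w = 1 ∧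
      Algebra.trace F K (b / Algebra.norm K w) = 0} =
      (artinSchreier (ZMod 2) E).toAddMonoidHom ⁻¹' T := by
    ext w
    calc Algebra.trace K E w = 1 ∧ Algebra.trace F K (b / Algebra.norm K w) = 0
      _ ↔ ∃ c : F, Algebra.trace K E w = 1 ∧ Algebra.norm K w = c • b := by
        simp only [trace_div_eq_zero_iff_exists_smul_eq hFK hb, exists_and_left,
          eq_comm (b := Algebra.norm K w)]
      _ ↔ ∃ c : F, Algebra.trace (ZMod 2) F (c * Algebra.trace F K b) = 1 ∧
          algebraMap K E (c • b) = artinSchreier (ZMod 2) E w := by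
        simp only [trace_eq_one_and_norm_eq_iff hKE, htrace, and_comm,
          eq_comm (a := artinSchreier (ZMod 2) E w)]
  have hinj : Function.Injective fun c : F ↦ algebraMap K E (c • b) :=
    (algebraMap K E).injective.comp (smul_left_injective F hb)
  have hT : T ⊆ Set.range (artinSchreier (ZMod 2) E).toAddMonoidHom := by
    rintro _ ⟨c, -, rfl⟩
    exact algebraMap_mem_range_artinSchreier (by rw [hKE]; rfl) (c • b)
  have hker : Nat.card (artinSchreier (ZMod 2) E).toAddMonoidHom.ker = 2 :=
    (card_ker_artinSchreier (ZMod 2) E).trans (Nat.card_zmod 2)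
  rw [hpreimage, ncard_preimage_eq_card_ker_mul_ncard _ hT, hker,
    Set.ncard_image_of_injective _ hinj]

lemma trace_norm_eq_zero_iff_exists_eq_pow [CharP E 2] (hFK : finrank F K = 2)
    (hKE : finrank K E = 2) {δ : E} (hδ : δ ≠ 0) :
    Algebra.trace F K (Algebra.norm K δ) = 0 ↔ ∃ γ ≠ 0, δ = γ ^ (Nat.card F + 1) := by
  have : Finite K := Finite.of_injective _ (algebraMap K E).injective
  have : Finite F := Finite.of_injective _ (algebraMap F K).injective
  have : CharP K 2 := (algebraMap K E).charP (algebraMap K E).injective 2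
  have hK : Nat.card K = Nat.card F ^ 2 := by rw [natCard_eq_pow_finrank (K := F), hFK]
  have hE : Nat.card E = Nat.card K ^ 2 := by rw [natCard_eq_pow_finrank (K := K), hKE]
  have hcard : (Nat.card F + 1) * ((Nat.card K + 1) * (Nat.card F - 1)) = Nat.card E - 1 := by
    obtain ⟨m, hm⟩ := Nat.exists_eq_add_of_lt (Nat.card_pos (α := F))
    rw [hE, hK, hm]
    simp only [zero_add, Nat.add_sub_cancel]
    exact Nat.eq_sub_of_add_eq (by ring)
  have hnorm : Algebra.norm K δ ≠ 0 := by simpa [Algebra.norm_eq_zero_iff]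
  calc Algebra.trace F K (Algebra.norm K δ) = 0
    _ ↔ Algebra.norm K δ ^ Nat.card F = Algebra.norm K δ := by
      rw [trace_eq_zero_iff_mem_range_algebraMap hFK, pow_card_eq_self_iff_mem_range_algebraMap]
    _ ↔ Algebra.norm K δ ^ (Nat.card F - 1) = 1 := by
      rw [← pow_sub_one_mul Nat.card_pos.ne', mul_eq_right₀ hnorm]
    _ ↔ δ ^ ((Nat.card K + 1) * (Nat.card F - 1)) = 1 := by
      rw [← (algebraMap K E).injective.eq_iff, map_pow, algebraMap_norm_of_finrank_eq_two hKE,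
        map_one, pow_mul]
    _ ↔ ∃ γ ≠ 0, δ = γ ^ (Nat.card F + 1) :=
      (exists_ne_zero_eq_pow_iff_pow_eq_one hcard hδ).symm

variable [Algebra F E] [IsScalarTower F K E]

lemma trace_algebraMap_mul_pow_card_sub_one [CharP E 2] (hKE : finrank K E = 2) (b : K) (z : E) :
    Algebra.trace F E (algebraMap K E b * z ^ (Nat.card K - 1)) =
      Algebra.trace F K (b * (Algebra.trace K E z ^ 2 / Algebra.norm K z)) := by
  have : Finite K := Finite.of_injective _ (algebraMap K E).injective
  rw [← Algebra.trace_trace (S := K), ← Algebra.smul_def, map_smul, smul_eq_mul,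
    trace_pow_card_sub_one hKE]

lemma ncard_trace_algebraMap_mul_pow_eq_zero [CharP E 2] (hKE : finrank K E = 2) (b : K) :
    {z : E | Algebra.trace F E (algebraMap K E b * z ^ (Nat.card K - 1)) = 0}.ncard =
      Nat.card K + (Nat.card K - 1) *
        {w : E | Algebra.trace K E w = 1 ∧
          Algebra.trace F K (b / Algebra.norm K w) = 0}.ncard := by
  have : Finite K := Finite.of_injective _ (algebraMap K E).injective
  set S := {z : E | Algebra.trace F E (algebraMap K E b * z ^ (Nat.card K - 1)) = 0} with hS
  have hsmul (c : Kˣ) : ∀ z ∈ S, c • z ∈ S := by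
    have := Fintype.ofFinite K
    intro z hz
    rwa [hS, Set.mem_ofPred_eq, Units.smul_def, Algebra.smul_def, mul_pow, ← map_pow,
      Nat.card_eq_fintype_card, FiniteField.pow_card_sub_one_eq_one _ c.ne_zero, map_one, one_mul,
      ← Nat.card_eq_fintype_card]
  have hker : S ∩ {z | Algebra.trace K E z = 0} = {z | Algebra.trace K E z = 0} := by
    refine Set.inter_eq_right.mpr fun z hz ↦ ?_
    rw [Set.mem_ofPred_eq] at hz
    simp [hS, trace_algebraMap_mul_pow_card_sub_one hKE, hz]
  have hcardker : {z | Algebra.trace K E z = 0}.ncard = Nat.card K := by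
    refine Nat.eq_of_mul_eq_mul_left (Nat.card_pos (α := K)) ?_
    rw [card_mul_ncard_fiber_eq_card (Algebra.trace_ne_zero K E), natCard_eq_pow_finrank (K := K),
      hKE, sq]
  have hone : {z ∈ S | Algebra.trace K E z = 1} = {w : E | Algebra.trace K E w = 1 ∧
      Algebra.trace F K (b / Algebra.norm K w) = 0} := by
    ext z
    simp +contextual [hS, trace_algebraMap_mul_pow_card_sub_one hKE, and_comm, div_eq_mul_inv]
  rw [← Set.ncard_inter_add_ncard_sdiff_eq_ncard S {z | Algebra.trace K E z = 0}, hker, hcardker,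
    ncard_sdiff_ker_eq_mul_ncard _ hsmul, hone]

lemma ncard_trace_algebraMap_mul_pow_eq_zero_of_trace_eq_zero [CharP E 2]
    (hFK : finrank F K = 2) (hKE : finrank K E = 2) {b : K} (hb : b ≠ 0)
    (htrace : Algebra.trace F K b = 0) :
    {z : E | Algebra.trace F E (algebraMap K E b * z ^ (Nat.card K - 1)) = 0}.ncard =
      Nat.card F ^ 2 := by
  have : CharP K 2 := (algebraMap K E).charP (algebraMap K E).injective 2
  have : CharP F 2 := (algebraMap F K).charP (algebraMap F K).injective 2
  have : Finite K := Finite.of_injective _ (algebraMap K E).injective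
  let := ZMod.algebra F 2
  let := ZMod.algebra K 2
  let := ZMod.algebra E 2
  rw [ncard_trace_algebraMap_mul_pow_eq_zero hKE,
    ncard_trace_eq_one_and_trace_div_norm_eq_zero hFK hKE hb]
  simp [htrace, natCard_eq_pow_finrank (K := F) (V := K), hFK]

lemma ncard_trace_algebraMap_mul_pow_eq_zero_of_trace_ne_zero [CharP E 2]
    (hFK : finrank F K = 2) (hKE : finrank K E = 2) {b : K} (htrace : Algebra.trace F K b ≠ 0) :
    {z : E | Algebra.trace F E (algebraMap K E b * z ^ (Nat.card K - 1)) = 0}.ncard =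
      Nat.card F ^ 3 + Nat.card F ^ 2 - Nat.card F := by
  have : CharP K 2 := (algebraMap K E).charP (algebraMap K E).injective 2
  have : CharP F 2 := (algebraMap F K).charP (algebraMap F K).injective 2
  have : Finite K := Finite.of_injective _ (algebraMap K E).injective
  have : Finite F := Finite.of_injective _ (algebraMap F K).injective
  let := ZMod.algebra F 2
  let := ZMod.algebra K 2
  let := ZMod.algebra E 2
  have hb : b ≠ 0 := fun h ↦ htrace (by rw [h, map_zero])
  have hhalf := card_mul_ncard_trace_mul_eq htrace (1 : ZMod 2)
  rw [Nat.card_zmod] at hhalf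
  have hle : Nat.card F ≤ Nat.card F ^ 3 := Nat.le_self_pow three_ne_zero _
  rw [ncard_trace_algebraMap_mul_pow_eq_zero hKE,
    ncard_trace_eq_one_and_trace_div_norm_eq_zero hFK hKE hb,
    hhalf, natCard_eq_pow_finrank (K := F) (V := K), hFK, Nat.sub_one_mul, ← pow_succ]
  lia

end Tower

lemma exists_ne_zero_sq_eq_pow_iff {L : Type*} [Field L] [CharP L 2] [PerfectRing L 2] {m : ℕ}
    {δ : L} : (∃ γ ≠ 0, δ ^ 2 = γ ^ m) ↔ ∃ γ ≠ 0, δ = γ ^ m := by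
  constructor
  · rintro ⟨γ, hγ, hδγ⟩
    obtain ⟨ε, rfl⟩ := surjective_frobenius L 2 γ
    simp only [frobenius_def] at hγ hδγ
    exact ⟨ε, ne_zero_pow two_ne_zero hγ, CharTwo.sq_injective (hδγ.trans (pow_right_comm ε 2 m))⟩
  · rintro ⟨γ, hγ, rfl⟩
    exact ⟨γ ^ 2, pow_ne_zero 2 hγ, pow_right_comm γ m 2⟩

lemma exists_intermediateField_finrank_eq {F E : Type*} [Field F] [Field E] [Finite E]
    [Algebra F E] {n : ℕ} (hn : n ∣ finrank F E) :
    ∃ K : IntermediateField F E, finrank F K = n := by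
  have : Finite F := Finite.of_injective _ (algebraMap F E).injective
  have : NeZero n := ⟨ne_zero_of_dvd_ne_zero finrank_pos.ne' hn⟩
  obtain ⟨p, _⟩ := CharP.exists F
  have : Fact p.Prime := ⟨CharP.char_is_prime F p⟩
  have hfinrank := FiniteField.finrank_extension F p n
  obtain ⟨f⟩ := FiniteField.nonempty_algHom_of_finrank_dvd (L := E) (hfinrank.symm ▸ hn)
  exact ⟨f.fieldRange, (AlgEquiv.ofInjectiveField f).toLinearEquiv.finrank_eq.symm.trans hfinrank⟩

theorem count_zeros_of_trace_beta_x_pow_general {q : ℕ} (F E : Type*) [Field F] [Fintype F]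
    [Field E] [Fintype E] [Algebra F E] [CharP F 2]
    (hF : Fintype.card F = q) (hE : Fintype.card E = q ^ 4) (β : E) (hβ : β ≠ 0) :
    ((∃ γ : E, γ ≠ 0 ∧ β = γ ^ (q + 1)) →
      {x : E | Algebra.trace F E (β * x ^ (q ^ 2 - 1)) = 0}.ncard = q ^ 2) ∧
    (¬(∃ γ : E, γ ≠ 0 ∧ β = γ ^ (q + 1)) →
      {x : E | Algebra.trace F E (β * x ^ (q ^ 2 - 1)) = 0}.ncard = q ^ 3 + q ^ 2 - q) := by
  subst hF
  have : CharP E 2 := charP_of_injective_algebraMap' F 2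
  have hFE : finrank F E = 4 := by
    rw [card_eq_pow_finrank (K := F)] at hE
    exact Nat.pow_right_injective Fintype.one_lt_card hE
  obtain ⟨K, hFK⟩ := exists_intermediateField_finrank_eq (show 2 ∣ finrank F E by simp [hFE])
  have hKE : finrank K E = 2 := by
    have := finrank_mul_finrank F K E
    lia
  have hK : Nat.card K = Nat.card F ^ 2 := by rw [natCard_eq_pow_finrank (K := F), hFK]
  obtain ⟨δ, rfl⟩ := surjective_frobenius E 2 β
  have hδ : δ ≠ 0 := ne_zero_pow two_ne_zero hβ
  have hnorm : Algebra.norm K δ ≠ 0 := Algebra.norm_ne_zero_iff.mpr hδ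
  have hcount := ncard_sq_mul_pow_card_sub_one_mem hKE hδ {y | Algebra.trace F E y = 0}
  simp only [Set.mem_ofPred_eq] at hcount
  rw [frobenius_def, ← Nat.card_eq_fintype_card, exists_ne_zero_sq_eq_pow_iff,
    ← trace_norm_eq_zero_iff_exists_eq_pow hFK hKE hδ, ← hK, hcount]
  simpa only [hK] using And.intro
    (ncard_trace_algebraMap_mul_pow_eq_zero_of_trace_eq_zero hFK hKE hnorm)
    (ncard_trace_algebraMap_mul_pow_eq_zero_of_trace_ne_zero hFK hKE)

/-- For q = 2^s (s ≥ 2), r = q⁴ and nonzero β ∈ GF(r), the number of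
x ∈ GF(r) with Tr_{r/q}(β x^{q²−1}) = 0 equals q² if β is a (q+1)-th power in GF(r)^*,
and q³ + q² − q otherwise. -/
theorem count_zeros_of_trace_beta_x_pow {q s : ℕ} (hs : 2 ≤ s) (hq : q = 2 ^ s)
    (F E : Type) [Field F] [Fintype F] [Field E] [Fintype E] [Algebra F E]
    (hF : Fintype.card F = q) (hE : Fintype.card E = q ^ 4)
    (β : E) (hβ : β ≠ 0) :
    ((∃ γ : E, γ ≠ 0 ∧ β = γ ^ (q + 1)) →
      {x : E | Algebra.trace F E (β * x ^ (q ^ 2 - 1)) = 0}.ncard = q ^ 2) ∧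
    (¬(∃ γ : E, γ ≠ 0 ∧ β = γ ^ (q + 1)) →
      {x : E | Algebra.trace F E (β * x ^ (q ^ 2 - 1)) = 0}.ncard = q ^ 3 + q ^ 2 - q) := by
  have : CharP F 2 := charP_of_card_eq_prime_pow (hF.trans hq)
  exact count_zeros_of_trace_beta_x_pow_general F E hF hE β hβ
end

section
/- Let q = 2^s with s ≥ 2, r = q⁴, and N = q²−1, so that n = (r−1)/N = q²+1. In the irreducible cyclic code C(r,N) over GF(q), every nonzero codeword has Hamming weight q²−q or q²; more precisely, for nonzero β ∈ GF(r), the codeword c(β) has weight q² if β is a (q+1)-th power in GF(r)^* and weight q²−q otherwise, and the code has exactly (q²−q)(q²+1) codewords of weight q²−q and exactly (q−1)(q²+1) codewords of weight q². -/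
/-!
Since `x ^ (q² + 1) = x²` on `GF(q)` and squaring is injective in characteristic 2, distinct
`(q² + 1)`-th roots of unity are linearly independent over `GF(q)`. Hence any two coordinates of
`c(β)` are independent and uniform for random `β`, which determines the first two moments of the
weight: the squared deviations of the weights from `q² - q` add up to `q³(q² - 1)`.

If `β = γ ^ (q + 1)`, then a zero coordinate comes from some `a = β θ ^ j` of trace zero with
`a · a^(q²) = N(γ) = c²` for some `c ∈ GF(q)`. Then `{a, a^(q²)}` and `{a^q, a^(q³)}` have equal
sums and equal products, which forces `a ∈ GF(q)` and so `a = c`. Conversely `Tr(c) = 4c = 0`, so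
exactly one coordinate vanishes and the weight is `q²`.

The zero codeword and the `(q - 1)(q² + 1)` powers already contribute
`(q² - q)² + (q - 1)(q² + 1)q² = q³(q² - 1)` to the sum of squared deviations, so every other
codeword has weight exactly `q² - q`.
-/

open Finset

section PowerMoments

theorem card_filter_mem_mul_card_of_surjective {G H : Type*} [AddGroup G] [AddGroup H]
    [Fintype G] [Fintype H] [DecidableEq H] {f : G →+ H} (hf : Function.Surjective f)
    (S : Finset H) : #{g | f g ∈ S} * Fintype.card H = #S * Fintype.card G := by
  have card_fiber (h : H) : #{g | f g = h} = #{g | f g = 0} :=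
    AddMonoidHom.card_fiber_eq_of_mem_range f (hf h) (hf 0)
  have card_preimage (T : Finset H) : #{g | f g ∈ T} = #T * #{g | f g = 0} := by
    rw [card_eq_sum_card_fiberwise (f := f) (t := T) fun g hg ↦ by simpa using hg, ← smul_eq_mul,
      ← sum_const]
    refine sum_congr rfl fun h hh ↦ ?_
    rw [← card_fiber h, filter_filter]
    congr 1 with g
    simp only [mem_filter, mem_univ, true_and, and_iff_right_iff_imp]
    rintro rfl
    exact hh
  have card_domain : Fintype.card G = Fintype.card H * #{g | f g = 0} := by
    simpa using card_preimage univ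
  rw [card_preimage, card_domain]
  ring

theorem surjective_apply_of_pairwise {V ι X : Type*} [Nontrivial ι] {c : V → ι → X}
    (hc : Pairwise fun i j ↦ Function.Surjective fun v ↦ (c v i, c v j)) (i : ι) :
    Function.Surjective fun v ↦ c v i :=
  fun x ↦
    let ⟨_, hj⟩ := exists_ne i
    (hc hj.symm (x, x)).imp fun _ hv ↦ congrArg Prod.fst hv

variable {F V ι : Type*} [Field F] [Fintype F] [DecidableEq F] [AddCommGroup V] [Module F V]
  [Fintype V] {c : V →ₗ[F] ι → F}

theorem card_filter_apply_ne_zero_mul_card {i : ι}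
    (hc : Function.Surjective fun v ↦ c v i) :
    (#{v | c v i ≠ 0} * Fintype.card F : ℤ) = (Fintype.card F - 1) * Fintype.card V := by
  have h := card_filter_mem_mul_card_of_surjective
    (f := (LinearMap.proj i ∘ₗ c).toAddMonoidHom) hc {0}ᶜ
  rw [card_compl, card_singleton] at h
  zify [Fintype.card_pos (α := F)] at h
  simpa using h

theorem card_filter_apply_ne_zero_and_mul_card_sq {i j : ι}
    (hc : Function.Surjective fun v ↦ (c v i, c v j)) :
    (#{v | c v i ≠ 0 ∧ c v j ≠ 0} * Fintype.card F ^ 2 : ℤ) =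
      (Fintype.card F - 1) ^ 2 * Fintype.card V := by
  have h := card_filter_mem_mul_card_of_surjective
    (f := ((LinearMap.proj i ∘ₗ c).prod (LinearMap.proj j ∘ₗ c)).toAddMonoidHom) hc
    ({0}ᶜ ×ˢ {0}ᶜ)
  rw [card_product, card_compl, card_singleton, Fintype.card_prod, ← sq, ← sq] at h
  zify [Fintype.card_pos (α := F)] at h
  simpa using h

variable [Fintype ι]

theorem sum_hammingNorm_mul_card [Nontrivial ι]
    (hc : Pairwise fun i j ↦ Function.Surjective fun v ↦ (c v i, c v j)) :
    (∑ v, (hammingNorm (c v) : ℤ)) * Fintype.card F =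
      Fintype.card ι * (Fintype.card F - 1) * Fintype.card V := by
  calc (∑ v, (hammingNorm (c v) : ℤ)) * Fintype.card F
      = ∑ i, (#{v | c v i ≠ 0} * Fintype.card F : ℤ) := by
        rw [← sum_mul]
        exact_mod_cast congrArg (· * Fintype.card F)
          (sum_card_bipartiteAbove_eq_sum_card_bipartiteBelow (s := univ) (t := univ)
            fun v i ↦ c v i ≠ 0)
    _ = Fintype.card ι * (Fintype.card F - 1) * Fintype.card V := by
        simp only [card_filter_apply_ne_zero_mul_card (surjective_apply_of_pairwise hc _),
          sum_const, card_univ, nsmul_eq_mul, mul_assoc]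

theorem sum_hammingNorm_sq_mul_card_sq [Nontrivial ι]
    (hc : Pairwise fun i j ↦ Function.Surjective fun v ↦ (c v i, c v j)) :
    (∑ v, (hammingNorm (c v) : ℤ) ^ 2) * Fintype.card F ^ 2 =
      Fintype.card ι * (Fintype.card F - 1) *
        (Fintype.card ι * (Fintype.card F - 1) + 1) * Fintype.card V := by
  classical
  have hammingNorm_sq (w : ι → F) :
      hammingNorm w ^ 2 = #{p : ι × ι | w p.1 ≠ 0 ∧ w p.2 ≠ 0} := by
    rw [sq, hammingNorm, ← card_product, ← univ_product_univ,
      filter_product (fun i ↦ w i ≠ 0) (fun i ↦ w i ≠ 0)]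
  have pair_count (i j : ι) : (#{v | c v i ≠ 0 ∧ c v j ≠ 0} * Fintype.card F ^ 2 : ℤ) =
      (Fintype.card F - 1) ^ 2 * Fintype.card V +
        if i = j then ((Fintype.card F - 1) * Fintype.card V : ℤ) else 0 := by
    split_ifs with hij
    · subst hij
      have h := card_filter_apply_ne_zero_mul_card (surjective_apply_of_pairwise hc i)
      simp only [and_self]
      linear_combination (Fintype.card F : ℤ) * h
    · rw [card_filter_apply_ne_zero_and_mul_card_sq (hc hij), add_zero]
  calc (∑ v, (hammingNorm (c v) : ℤ) ^ 2) * Fintype.card F ^ 2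
      = ∑ p : ι × ι, (#{v | c v p.1 ≠ 0 ∧ c v p.2 ≠ 0} * Fintype.card F ^ 2 : ℤ) := by
        rw [← sum_mul]
        simp only [← Nat.cast_pow, hammingNorm_sq]
        exact_mod_cast congrArg (· * Fintype.card F ^ 2)
          (sum_card_bipartiteAbove_eq_sum_card_bipartiteBelow (s := univ) (t := univ)
            fun v (p : ι × ι) ↦ c v p.1 ≠ 0 ∧ c v p.2 ≠ 0)
    _ = Fintype.card ι * (Fintype.card F - 1) *
        (Fintype.card ι * (Fintype.card F - 1) + 1) * Fintype.card V := by
        simp only [pair_count, Fintype.sum_prod_type, sum_add_distrib, sum_const, card_univ,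
          sum_ite_eq, mem_univ, if_true, nsmul_eq_mul, Fintype.card_prod, Nat.cast_mul]
        ring

theorem sum_hammingNorm_sub_sq_mul_card_sq [Nontrivial ι]
    (hc : Pairwise fun i j ↦ Function.Surjective fun v ↦ (c v i, c v j)) (a : ℤ) :
    (∑ v, ((hammingNorm (c v) : ℤ) - a) ^ 2) * Fintype.card F ^ 2 =
      (Fintype.card ι * (Fintype.card F - 1) +
        (Fintype.card ι * (Fintype.card F - 1) - a * Fintype.card F) ^ 2) * Fintype.card V := by
  have expand : ∑ v, ((hammingNorm (c v) : ℤ) - a) ^ 2 =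
      ∑ v, (hammingNorm (c v) : ℤ) ^ 2 - 2 * a * ∑ v, (hammingNorm (c v) : ℤ) +
        Fintype.card V * a ^ 2 := by
    simp only [sub_sq, sum_add_distrib, sum_sub_distrib, mul_sum, sum_const, card_univ,
      nsmul_eq_mul]
    congr 2
    exact sum_congr rfl fun v _ ↦ by ring
  rw [expand]
  linear_combination sum_hammingNorm_sq_mul_card_sq hc -
    2 * a * Fintype.card F * sum_hammingNorm_mul_card hc

end PowerMoments

section TraceCode

variable (F : Type*) {E ι : Type*} [Field F] [Field E] [Algebra F E]

/-- The trace code of a family `x` of elements of `E`: it encodes `β` as the family of traces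
`Tr_{E/F} (β * x i)`. Every irreducible cyclic code is of this form. -/
noncomputable def traceCode (x : ι → E) : E →ₗ[F] ι → F :=
  LinearMap.pi fun i ↦ (Algebra.traceForm F E).flip (x i)

variable {F}

theorem traceCode_apply (x : ι → E) (β : E) (i : ι) :
    traceCode F x β i = Algebra.trace F E (β * x i) := rfl

theorem traceCode_surjective [FiniteDimensional F E] [Algebra.IsSeparable F E] [Finite ι]
    {x : ι → E} (hx : LinearIndependent F x) : Function.Surjective (traceCode F x) := by
  classical
  have := Fintype.ofFinite ι
  rw [← LinearMap.dualMap_injective_iff, injective_iff_map_eq_zero]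
  intro g hg
  have g_apply (w : ι → F) : g w = ∑ i, w i * g (Pi.single i 1) := by
    conv_lhs => rw [← univ_sum_single w, map_sum]
    exact sum_congr rfl fun i _ ↦ by
      rw [← smul_eq_mul, ← map_smul, ← Pi.single_smul, smul_eq_mul, mul_one]
  have sum_smul_eq_zero : ∑ i, g (Pi.single i 1) • x i = 0 := by
    refine (traceForm_nondegenerate F E).2 _ fun β ↦ ?_
    have h := LinearMap.congr_fun hg β
    rw [LinearMap.dualMap_apply, g_apply] at h
    simpa [traceCode_apply, mul_comm] using h
  refine LinearMap.pi_ext' fun i ↦ LinearMap.ext_ring ?_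
  simpa using Fintype.linearIndependent_iff.mp hx _ sum_smul_eq_zero i

theorem traceCode_pairwise_surjective [FiniteDimensional F E] [Algebra.IsSeparable F E]
    {x : ι → E} (hx : Pairwise fun i j ↦ LinearIndependent F ![x i, x j]) :
    Pairwise fun i j ↦ Function.Surjective fun β ↦ (traceCode F x β i, traceCode F x β j) := by
  rintro i j hij ⟨a, b⟩
  obtain ⟨β, hβ⟩ := traceCode_surjective (hx hij) ![a, b]
  exact ⟨β, Prod.ext (congrFun hβ 0) (congrFun hβ 1)⟩

end TraceCode

section FiniteField

section NonzeroPowers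

variable {E : Type*} [Field E] [Fintype E] [DecidableEq E] {d : ℕ}

variable (E d) in
/-- The `d`-th powers in the multiplicative group of the finite field `E`. -/
def nonzeroPowers : Finset E := {β | ∃ γ, γ ≠ 0 ∧ β = γ ^ d}

theorem mem_nonzeroPowers {β : E} : β ∈ nonzeroPowers E d ↔ ∃ γ, γ ≠ 0 ∧ β = γ ^ d :=
  mem_filter_univ _

theorem zero_notMem_nonzeroPowers : 0 ∉ nonzeroPowers E d := by
  rw [mem_nonzeroPowers]
  exact fun ⟨_, hγ, h⟩ ↦ pow_ne_zero d hγ h.symm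

theorem coe_nonzeroPowers :
    (nonzeroPowers E d : Set E) = Units.val '' ((powMonoidHom d : Eˣ →* Eˣ).range : Set Eˣ) := by
  ext β
  simp only [mem_coe, mem_nonzeroPowers, MonoidHom.coe_range, Set.mem_image, Set.mem_range,
    exists_exists_eq_and, powMonoidHom_apply, Units.val_pow_eq_pow_val]
  exact ⟨fun ⟨γ, hγ, h⟩ ↦ ⟨Units.mk0 γ hγ, h.symm⟩, fun ⟨γ, h⟩ ↦ ⟨γ, γ.ne_zero, h.symm⟩⟩

theorem card_nonzeroPowers_mul (hd : d ∣ Fintype.card E - 1) :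
    #(nonzeroPowers E d) * d = Fintype.card E - 1 := by
  have card_range : Nat.card (powMonoidHom d : Eˣ →* Eˣ).range = (Fintype.card E - 1) / d := by
    rw [IsCyclic.card_powMonoidHom_range, Nat.card_eq_fintype_card, Fintype.card_units,
      Nat.gcd_eq_right hd]
  rw [← Set.ncard_coe_finset, coe_nonzeroPowers,
    Set.ncard_image_of_injective _ Units.val_injective, ← Nat.card_coe_set_eq]
  exact card_range ▸ Nat.div_mul_cancel hd

end NonzeroPowers

theorem finrank_eq_of_card_eq_pow {F E : Type*} [Field F] [Fintype F] [AddCommGroup E] [Module F E]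
    [Fintype E] {m : ℕ} (h : Fintype.card E = Fintype.card F ^ m) : Module.finrank F E = m :=
  Nat.pow_right_injective Fintype.one_lt_card (Module.card_eq_pow_finrank.symm.trans h)

theorem isPrimitiveRoot_pow_of_forall_mem_zpowers {E : Type*} [Field E] [Fintype E] {α : Eˣ}
    (hα : ∀ x : Eˣ, x ∈ Subgroup.zpowers α) {d m : ℕ} (hdm : Fintype.card E - 1 = d * m) :
    IsPrimitiveRoot ((α : E) ^ d) m := by
  have order : orderOf α = Fintype.card E - 1 := by
    rw [orderOf_eq_card_of_forall_mem_zpowers hα, Nat.card_units, Nat.card_eq_fintype_card]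
  have primitive : IsPrimitiveRoot (α : E) (Fintype.card E - 1) :=
    IsPrimitiveRoot.coe_units_iff.2 (order ▸ IsPrimitiveRoot.orderOf α)
  exact primitive.pow (Nat.sub_pos_of_lt Fintype.one_lt_card) hdm

theorem mem_range_algebraMap_of_pow_card_eq {F E : Type*} [Field F] [Fintype F] [Field E]
    [Finite E] [Algebra F E] {x : E} (hx : x ^ Fintype.card F = x) :
    x ∈ Set.range (algebraMap F E) := by
  refine (IsGalois.mem_range_algebraMap_iff_fixed x).2 fun f ↦ ?_
  obtain ⟨n, rfl⟩ := (FiniteField.bijective_frobeniusAlgEquivOfAlgebraic_pow F E).2 f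
  rw [AlgEquiv.coe_pow]
  exact Function.iterate_fixed hx n

variable {F E : Type*} [Field F] [Fintype F] [Field E] [Algebra F E]

local notation "q" => Fintype.card F

theorem linearIndependent_pair_of_pow_card_sq_add_one_eq_one [CharP F 2] {x y : E}
    (hx : x ^ (q ^ 2 + 1) = 1) (hy : y ^ (q ^ 2 + 1) = 1) (hxy : x ≠ y) :
    LinearIndependent F ![x, y] := by
  have hx0 : x ≠ 0 := by
    rintro rfl
    simp at hx
  refine (LinearIndependent.pair_iff' hx0).2 fun a hax ↦ hxy ?_
  have ha_sq : a ^ 2 = 1 := by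
    have ha : algebraMap F E (a ^ (q ^ 2 + 1)) = 1 := by
      rw [← hax, smul_pow, hx, ← Algebra.algebraMap_eq_smul_one] at hy
      exact hy
    rwa [map_eq_one_iff _ (algebraMap F E).injective, pow_succ, FiniteField.pow_card_pow,
      ← sq] at ha
  have ha_one : a = 1 := CharTwo.sq_injective (by simpa using ha_sq)
  rw [← hax, ha_one, one_smul]

theorem mem_range_algebraMap_of_trace_eq_zero [Finite E] [CharP E 2]
    (hE : Module.finrank F E = 4) {a : E} (ha : a ^ (q ^ 2 + 1) ∈ Set.range (algebraMap F E))
    (htr : Algebra.trace F E a = 0) : a ∈ Set.range (algebraMap F E) := by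
  have sum_conj : a + a ^ q + a ^ q ^ 2 + a ^ q ^ 3 = 0 := by
    have h := FiniteField.algebraMap_trace_eq_sum_pow F E a
    simpa [htr, hE, sum_range_succ] using h.symm
  have mul_conj : a ^ q * a ^ q ^ 3 = a * a ^ q ^ 2 := by
    obtain ⟨c, hc⟩ := ha
    calc a ^ q * a ^ q ^ 3 = (a ^ (q ^ 2 + 1)) ^ q := by ring
      _ = a ^ (q ^ 2 + 1) := by rw [← hc, ← map_pow, FiniteField.pow_card]
      _ = a * a ^ q ^ 2 := by ring
  have factored : (a ^ q - a) * (a ^ q - a ^ q ^ 2) = 0 := by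
    linear_combination -a ^ q * sum_conj + mul_conj +
      (a ^ q * a ^ q + a * a ^ q ^ 2) * CharTwo.two_eq_zero (R := E)
  apply mem_range_algebraMap_of_pow_card_eq
  rcases mul_eq_zero.1 factored with h | h
  · exact sub_eq_zero.1 h
  · rw [pow_two, pow_mul] at h
    exact ((FiniteField.frobeniusAlgHom F E).injective (sub_eq_zero.1 h)).symm

theorem pow_eq_algebraMap_sq_and_trace_eq_zero_iff [Finite E] [CharP F 2]
    (hE : Module.finrank F E = 4) (c : F) (a : E) :
    a ^ (q ^ 2 + 1) = algebraMap F E (c ^ 2) ∧ Algebra.trace F E a = 0 ↔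
      a = algebraMap F E c := by
  have : CharP E 2 := charP_of_injective_algebraMap' F 2
  have pow_card_sq_add_one (b : F) : b ^ (q ^ 2 + 1) = b ^ 2 := by
    rw [pow_succ, FiniteField.pow_card_pow, sq]
  constructor
  · rintro ⟨hpow, htr⟩
    obtain ⟨b, rfl⟩ := mem_range_algebraMap_of_trace_eq_zero hE ⟨_, hpow.symm⟩ htr
    rw [← map_pow, pow_card_sq_add_one] at hpow
    rw [CharTwo.sq_injective ((algebraMap F E).injective hpow)]
  · rintro rfl
    have four_eq_zero : (4 : F) = 0 := by
      linear_combination 2 * CharTwo.two_eq_zero (R := F)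
    rw [← map_pow, pow_card_sq_add_one, Algebra.trace_algebraMap, hE]
    simp [four_eq_zero]

theorem existsUnique_pow_eq_one_and_trace_mul_eq_zero [Finite E] [CharP F 2]
    (hE : Module.finrank F E = 4) {γ : E} (hγ : γ ≠ 0) :
    ∃! x : E, x ^ (q ^ 2 + 1) = 1 ∧ Algebra.trace F E (γ ^ (q + 1) * x) = 0 := by
  obtain ⟨c, hc⟩ : ∃ c : F, Algebra.norm F γ = c ^ 2 := (isSquare_of_charTwo' _).exists_sq
  have pow_eq_norm : (γ ^ (q + 1)) ^ (q ^ 2 + 1) = algebraMap F E (c ^ 2) := by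
    rw [← hc, FiniteField.algebraMap_norm_eq_pow_sum, hE, Nat.card_eq_fintype_card, ← pow_mul]
    congr 1
    simp only [sum_range_succ, sum_range_zero]
    ring
  have hβ : γ ^ (q + 1) ≠ 0 := pow_ne_zero _ hγ
  have solution_iff (x : E) : x ^ (q ^ 2 + 1) = 1 ∧ Algebra.trace F E (γ ^ (q + 1) * x) = 0 ↔
      x = algebraMap F E c / γ ^ (q + 1) := by
    rw [eq_div_iff hβ, mul_comm x, ← pow_eq_algebraMap_sq_and_trace_eq_zero_iff hE, mul_pow,
      pow_eq_norm, mul_eq_left₀ (pow_eq_norm ▸ pow_ne_zero _ hβ)]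
  exact ⟨_, (solution_iff _).2 rfl, fun x ↦ (solution_iff x).1⟩

theorem card_nonzeroPowers_card_add_one [Fintype E] [DecidableEq E]
    (hE : Module.finrank F E = 4) : #(nonzeroPowers E (q + 1)) = (q - 1) * (q ^ 2 + 1) := by
  have factorization : Fintype.card E - 1 = (q - 1) * (q ^ 2 + 1) * (q + 1) := by
    rw [Module.card_eq_pow_finrank (K := F) (V := E), hE]
    zify [Fintype.card_pos (α := F), Nat.one_le_pow 4 q Fintype.card_pos]
    ring
  refine Nat.eq_of_mul_eq_mul_right (Nat.succ_pos q) ?_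
  rw [card_nonzeroPowers_mul (factorization ▸ dvd_mul_left _ _), factorization]

theorem card_compl_insert_zero_nonzeroPowers_card_add_one [Fintype E] [DecidableEq E]
    (hE : Module.finrank F E = 4) :
    #(insert 0 (nonzeroPowers E (q + 1)))ᶜ = (q ^ 2 - q) * (q ^ 2 + 1) := by
  have hq : 1 ≤ q := Fintype.card_pos
  have total := card_add_card_compl (insert 0 (nonzeroPowers E (q + 1)))
  rw [card_insert_of_notMem zero_notMem_nonzeroPowers, card_nonzeroPowers_card_add_one hE,
    Module.card_eq_pow_finrank (K := F) (V := E), hE] at total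
  zify [hq, Nat.le_self_pow two_ne_zero q] at total ⊢
  linear_combination total

end FiniteField

section CyclicCode

variable {F E : Type*} [Field F] [Fintype F] [Field E] [Algebra F E]

local notation "q" => Fintype.card F

theorem pairwise_linearIndependent_pow [CharP F 2] {θ : E}
    (hθ : IsPrimitiveRoot θ (q ^ 2 + 1)) :
    Pairwise fun i j : Fin (q ^ 2 + 1) ↦ LinearIndependent F ![θ ^ (i : ℕ), θ ^ (j : ℕ)] := by
  have root_of_unity (i : ℕ) : (θ ^ i) ^ (q ^ 2 + 1) = 1 := by
    rw [pow_right_comm, hθ.pow_eq_one, one_pow]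
  intro i j hij
  exact linearIndependent_pair_of_pow_card_sq_add_one_eq_one (root_of_unity i)
    (root_of_unity j) fun h ↦ hij (Fin.ext (hθ.pow_inj i.2 j.2 h))

theorem ncard_range_inter_eq_card_filter {A B : Type*} [Fintype A] {c : A → B}
    (hc : Function.Injective c) (P : B → Prop) [DecidablePred P] :
    {w | w ∈ Set.range c ∧ P w}.ncard = #{a | P (c a)} := by
  have eq_image : {w | w ∈ Set.range c ∧ P w} = c '' {a | P (c a)} := by
    ext w
    constructor
    · rintro ⟨⟨a, rfl⟩, hP⟩
      exact ⟨a, hP, rfl⟩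
    · rintro ⟨a, hP, rfl⟩
      exact ⟨⟨a, rfl⟩, hP⟩
  rw [eq_image, Set.ncard_image_of_injective _ hc, ← Set.ncard_coe_finset, coe_filter_univ]

theorem card_filter_primitiveRoot_pow_eq_one {R : Type*} [CommRing R] [IsDomain R] {n : ℕ}
    [NeZero n] {θ : R} (hθ : IsPrimitiveRoot θ n) {P : R → Prop} [DecidablePred P]
    (hP : ∃! x, x ^ n = 1 ∧ P x) : #{j : Fin n | P (θ ^ (j : ℕ))} = 1 := by
  obtain ⟨x, ⟨hx, hPx⟩, huniq⟩ := hP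
  obtain ⟨k, hk, rfl⟩ := hθ.eq_pow_of_pow_eq_one hx
  refine card_eq_one.2 ⟨⟨k, hk⟩, ?_⟩
  ext j
  simp only [mem_filter, mem_univ, true_and, mem_singleton, Fin.ext_iff]
  refine ⟨fun hj ↦ hθ.pow_inj j.2 hk (huniq _ ⟨?_, hj⟩), fun hj ↦ hj ▸ hPx⟩
  rw [pow_right_comm, hθ.pow_eq_one, one_pow]

variable (F) in
/-- The map `β ↦ c(β)` whose range is the cyclic code of length `n` attached to `θ`. For
`θ = α ^ N` with `α` a primitive element of `E` and `n = (|E| - 1) / N`, the range is the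
irreducible cyclic code `C(|E|, N)`. -/
noncomputable def cyclicCode (θ : E) (n : ℕ) : E →ₗ[F] Fin n → F :=
  traceCode F fun j ↦ θ ^ (j : ℕ)

variable [CharP F 2] {θ : E}

section

variable [DecidableEq F]

theorem hammingNorm_cyclicCode_pow [Finite E] (hE : Module.finrank F E = 4)
    (hθ : IsPrimitiveRoot θ (q ^ 2 + 1)) {γ : E} (hγ : γ ≠ 0) :
    hammingNorm (cyclicCode F θ (q ^ 2 + 1) (γ ^ (q + 1))) = q ^ 2 := by
  have one_zero := card_filter_primitiveRoot_pow_eq_one hθ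
    (existsUnique_pow_eq_one_and_trace_mul_eq_zero hE hγ)
  have zeros_add_weight := card_filter_add_card_filter_not (s := univ)
    fun j : Fin (q ^ 2 + 1) ↦ Algebra.trace F E (γ ^ (q + 1) * θ ^ (j : ℕ)) = 0
  rw [one_zero, card_univ, Fintype.card_fin, add_comm] at zeros_add_weight
  exact Nat.add_right_cancel zeros_add_weight

theorem sum_hammingNorm_cyclicCode_sub_sq [Fintype E] (hE : Module.finrank F E = 4)
    (hθ : IsPrimitiveRoot θ (q ^ 2 + 1)) :
    ∑ β, ((hammingNorm (cyclicCode F θ (q ^ 2 + 1) β) : ℤ) - (q ^ 2 - q)) ^ 2 =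
      q ^ 3 * (q ^ 2 - 1) := by
  have : Nontrivial (Fin (q ^ 2 + 1)) :=
    Fin.nontrivial_iff_two_le.2 (Nat.succ_le_succ (pow_pos Fintype.card_pos 2))
  have variance := sum_hammingNorm_sub_sq_mul_card_sq
    (traceCode_pairwise_surjective (pairwise_linearIndependent_pow hθ)) (q ^ 2 - q)
  rw [Module.card_eq_pow_finrank (K := F) (V := E), hE, Fintype.card_fin] at variance
  have hq : (q : ℤ) ^ 2 ≠ 0 := by simp
  refine mul_right_cancel₀ hq (variance.trans ?_)
  push_cast
  ring

theorem sum_insert_zero_nonzeroPowers_hammingNorm_sub_sq [Fintype E] [DecidableEq E]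
    (hE : Module.finrank F E = 4) (hθ : IsPrimitiveRoot θ (q ^ 2 + 1)) :
    ∑ β ∈ insert 0 (nonzeroPowers E (q + 1)),
      ((hammingNorm (cyclicCode F θ (q ^ 2 + 1) β) : ℤ) - (q ^ 2 - q)) ^ 2 =
        q ^ 3 * (q ^ 2 - 1) := by
  have deviation_of_power (β : E) (hβ : β ∈ nonzeroPowers E (q + 1)) :
      ((hammingNorm (cyclicCode F θ (q ^ 2 + 1) β) : ℤ) - (q ^ 2 - q)) ^ 2 = q ^ 2 := by
    obtain ⟨γ, hγ, rfl⟩ := mem_nonzeroPowers.1 hβ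
    rw [hammingNorm_cyclicCode_pow hE hθ hγ, Nat.cast_pow, sub_sub_cancel]
  rw [sum_insert zero_notMem_nonzeroPowers, sum_congr rfl deviation_of_power, sum_const,
    nsmul_eq_mul, card_nonzeroPowers_card_add_one hE, map_zero, hammingNorm_zero]
  push_cast [Fintype.card_pos (α := F)]
  ring

theorem hammingNorm_cyclicCode_of_not_exists_eq_pow [Finite E] (hE : Module.finrank F E = 4)
    (hθ : IsPrimitiveRoot θ (q ^ 2 + 1)) {β : E} (hβ : β ≠ 0)
    (hpow : ¬∃ γ, γ ≠ 0 ∧ β = γ ^ (q + 1)) :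
    hammingNorm (cyclicCode F θ (q ^ 2 + 1) β) = q ^ 2 - q := by
  classical
  have := Fintype.ofFinite E
  have sum_compl := sum_add_sum_compl (insert 0 (nonzeroPowers E (q + 1)))
    fun β ↦ ((hammingNorm (cyclicCode F θ (q ^ 2 + 1) β) : ℤ) - (q ^ 2 - q)) ^ 2
  rw [sum_hammingNorm_cyclicCode_sub_sq hE hθ,
    sum_insert_zero_nonzeroPowers_hammingNorm_sub_sq hE hθ, add_eq_left] at sum_compl
  have mem_compl_powers : β ∈ (insert 0 (nonzeroPowers E (q + 1)))ᶜ := by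
    rw [mem_compl, mem_insert, mem_nonzeroPowers]
    exact not_or_intro hβ hpow
  have deviation_eq_zero :=
    (sum_eq_zero_iff_of_nonneg fun _ _ ↦ sq_nonneg _).1 sum_compl β mem_compl_powers
  zify [Nat.le_self_pow two_ne_zero q]
  exact sub_eq_zero.1 (pow_eq_zero_iff two_ne_zero |>.1 deviation_eq_zero)

theorem hammingNorm_cyclicCode_eq_card_sq_iff [Finite E] (hE : Module.finrank F E = 4)
    (hθ : IsPrimitiveRoot θ (q ^ 2 + 1)) (β : E) :
    hammingNorm (cyclicCode F θ (q ^ 2 + 1) β) = q ^ 2 ↔ ∃ γ, γ ≠ 0 ∧ β = γ ^ (q + 1) := by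
  have hq : 0 < q := Fintype.card_pos
  refine ⟨fun h ↦ by_contra fun hpow ↦ ?_, ?_⟩
  · rcases eq_or_ne β 0 with rfl | hβ
    · rw [map_zero, hammingNorm_zero] at h
      exact (pow_pos hq 2).ne h
    · rw [hammingNorm_cyclicCode_of_not_exists_eq_pow hE hθ hβ hpow] at h
      exact (Nat.sub_lt (pow_pos hq 2) hq).ne h
  · rintro ⟨γ, hγ, rfl⟩
    exact hammingNorm_cyclicCode_pow hE hθ hγ

theorem hammingNorm_cyclicCode_eq_card_sq_sub_card_iff [Finite E]
    (hE : Module.finrank F E = 4) (hθ : IsPrimitiveRoot θ (q ^ 2 + 1)) (β : E) :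
    hammingNorm (cyclicCode F θ (q ^ 2 + 1) β) = q ^ 2 - q ↔
      β ≠ 0 ∧ ¬∃ γ, γ ≠ 0 ∧ β = γ ^ (q + 1) := by
  have hq : 1 < q := Fintype.one_lt_card
  refine ⟨fun h ↦ ⟨?_, fun hpow ↦ ?_⟩, fun ⟨hβ, hpow⟩ ↦
    hammingNorm_cyclicCode_of_not_exists_eq_pow hE hθ hβ hpow⟩
  · rintro rfl
    rw [map_zero, hammingNorm_zero] at h
    exact (Nat.sub_pos_of_lt (lt_self_pow₀ hq one_lt_two)).ne h
  · rw [(hammingNorm_cyclicCode_eq_card_sq_iff hE hθ β).2 hpow] at h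
    exact (Nat.sub_lt (pow_pos (zero_lt_one.trans hq) 2) (zero_lt_one.trans hq)).ne h.symm

end

theorem cyclicCode_injective [Finite E] (hE : Module.finrank F E = 4)
    (hθ : IsPrimitiveRoot θ (q ^ 2 + 1)) :
    Function.Injective (cyclicCode F θ (q ^ 2 + 1)) := by
  classical
  have hq : 1 < q := Fintype.one_lt_card
  refine (injective_iff_map_eq_zero _).2 fun β h ↦ by_contra fun hβ ↦ ?_
  have weight_eq_zero : hammingNorm (cyclicCode F θ (q ^ 2 + 1) β) = 0 := by
    rw [h, hammingNorm_zero]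
  by_cases hpow : ∃ γ, γ ≠ 0 ∧ β = γ ^ (q + 1)
  · rw [(hammingNorm_cyclicCode_eq_card_sq_iff hE hθ β).2 hpow] at weight_eq_zero
    exact (pow_pos (zero_lt_one.trans hq) 2).ne' weight_eq_zero
  · rw [hammingNorm_cyclicCode_of_not_exists_eq_pow hE hθ hβ hpow] at weight_eq_zero
    exact (Nat.sub_pos_of_lt (lt_self_pow₀ hq one_lt_two)).ne' weight_eq_zero

theorem irreducible_cyclic_code_weight_distribution_general [Finite E] [DecidableEq F]
    (hE : Module.finrank F E = 4) (hθ : IsPrimitiveRoot θ (q ^ 2 + 1)) :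
    (∀ w ∈ Set.range (cyclicCode F θ (q ^ 2 + 1)), w ≠ 0 →
      hammingNorm w = q ^ 2 - q ∨ hammingNorm w = q ^ 2) ∧
    (∀ β : E, β ≠ 0 →
      ((∃ γ : E, γ ≠ 0 ∧ β = γ ^ (q + 1)) →
        hammingNorm (cyclicCode F θ (q ^ 2 + 1) β) = q ^ 2) ∧
      (¬(∃ γ : E, γ ≠ 0 ∧ β = γ ^ (q + 1)) →
        hammingNorm (cyclicCode F θ (q ^ 2 + 1) β) = q ^ 2 - q)) ∧
    {w | w ∈ Set.range (cyclicCode F θ (q ^ 2 + 1)) ∧ hammingNorm w = q ^ 2 - q}.ncard =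
      (q ^ 2 - q) * (q ^ 2 + 1) ∧
    {w | w ∈ Set.range (cyclicCode F θ (q ^ 2 + 1)) ∧ hammingNorm w = q ^ 2}.ncard =
      (q - 1) * (q ^ 2 + 1) := by
  classical
  have := Fintype.ofFinite E
  have weight_of_power (β : E) := (hammingNorm_cyclicCode_eq_card_sq_iff hE hθ β).2
  have weight_of_not_power (β : E) (hβ : β ≠ 0) :=
    hammingNorm_cyclicCode_of_not_exists_eq_pow hE hθ hβ
  refine ⟨?_, fun β hβ ↦ ⟨weight_of_power β, weight_of_not_power β hβ⟩, ?_, ?_⟩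
  · rintro _ ⟨β, rfl⟩ hcβ
    have hβ : β ≠ 0 := mt (fun h ↦ h ▸ map_zero _) hcβ
    exact (em _).symm.imp (weight_of_not_power β hβ) (weight_of_power β)
  · rw [ncard_range_inter_eq_card_filter (cyclicCode_injective hE hθ),
      ← card_compl_insert_zero_nonzeroPowers_card_add_one hE]
    congr 1 with β
    simp only [mem_filter_univ, hammingNorm_cyclicCode_eq_card_sq_sub_card_iff hE hθ, mem_compl,
      mem_insert, mem_nonzeroPowers, not_or]
  · rw [ncard_range_inter_eq_card_filter (cyclicCode_injective hE hθ),
      ← card_nonzeroPowers_card_add_one hE]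
    congr 1 with β
    rw [mem_filter_univ, hammingNorm_cyclicCode_eq_card_sq_iff hE hθ, mem_nonzeroPowers]

end CyclicCode

/-- For q = 2^s (s ≥ 2), r = q⁴, N = q²−1, n = q²+1, every nonzero
codeword of the irreducible cyclic code C(r,N) over GF(q) has Hamming weight q²−q or
q²; the codeword c(β) (β ≠ 0) has weight q² iff β is a (q+1)-th power in GF(r)^*, and
the code has exactly (q²−q)(q²+1) codewords of weight q²−q and exactly (q−1)(q²+1)
codewords of weight q². -/
theorem irreducible_cyclic_code_weight_distribution {q s : ℕ} (hs : 2 ≤ s) (hq : q = 2 ^ s)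
    (F E : Type) [Field F] [Fintype F] [DecidableEq F] [Field E] [Fintype E] [Algebra F E]
    (hF : Fintype.card F = q) (hE : Fintype.card E = q ^ 4)
    (α : Eˣ) (hα : ∀ x : Eˣ, x ∈ Subgroup.zpowers α) :
    let cw : E → (Fin (q ^ 2 + 1) → F) := fun β j =>
      Algebra.trace F E (β * (((α : E) ^ (q ^ 2 - 1)) ^ (j : ℕ)))
    (∀ w ∈ Set.range cw, w ≠ 0 →
      hammingNorm w = q ^ 2 - q ∨ hammingNorm w = q ^ 2) ∧
    (∀ β : E, β ≠ 0 →
      ((∃ γ : E, γ ≠ 0 ∧ β = γ ^ (q + 1)) → hammingNorm (cw β) = q ^ 2) ∧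
      (¬(∃ γ : E, γ ≠ 0 ∧ β = γ ^ (q + 1)) → hammingNorm (cw β) = q ^ 2 - q)) ∧
    {w : Fin (q ^ 2 + 1) → F | w ∈ Set.range cw ∧ hammingNorm w = q ^ 2 - q}.ncard
      = (q ^ 2 - q) * (q ^ 2 + 1) ∧
    {w : Fin (q ^ 2 + 1) → F | w ∈ Set.range cw ∧ hammingNorm w = q ^ 2}.ncard
      = (q - 1) * (q ^ 2 + 1) := by
  subst hF
  have : CharP F 2 := charP_of_card_eq_prime_pow hq
  have card_units : Fintype.card E - 1 = (Fintype.card F ^ 2 - 1) * (Fintype.card F ^ 2 + 1) := by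
    rw [hE, mul_comm, ← Nat.sq_sub_sq, one_pow, ← pow_mul]
  exact irreducible_cyclic_code_weight_distribution_general (finrank_eq_of_card_eq_pow hE)
    (isPrimitiveRoot_pow_of_forall_mem_zpowers hα card_units)
end

section
/- Let q = 2^s with s ≥ 2 and regard GF(q⁴) as a 4-dimensional vector space over GF(q). Let U = { u ∈ GF(q⁴)^* : u^{q²+1} = 1 } be the subgroup of order q²+1 of GF(q⁴)^*. Then any two distinct elements of U are not GF(q)-proportional (so the elements of U span q²+1 distinct points of PG(3,q)), and any three distinct elements of U are linearly independent over GF(q); hence U determines an ovoid in PG(3,q). -/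
/-!
Let `σ` be the `q`-Frobenius of `E` over `F`. The elements of `U` are those with `u * σ (σ u) = 1`,
so applying `σ²` to a relation `a u + b v + c w = 0` gives `a u⁻¹ + b v⁻¹ + c w⁻¹ = 0`. Multiplying
`a u + b v = -c w` by `a u⁻¹ + b v⁻¹ = -c w⁻¹` shows that, if `a b ≠ 0`, the ratio `t = u / v` has
`t + t⁻¹ ∈ F`. Then `σ` permutes `{t, t⁻¹}`, so `σ² t = t`; but `σ² t = t⁻¹` as well, hence
`t² = 1`, and in characteristic two `u = v`.
-/

theorem ncard_setOf_ne_zero_and_pow_eq_one (K : Type*) [Field K] [Finite K] (n : ℕ) :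
    {x : K | x ≠ 0 ∧ x ^ n = 1}.ncard = (Nat.card K - 1).gcd n := by
  have image_rootsOfUnity :
      {x : K | x ≠ 0 ∧ x ^ n = 1} = Units.val '' (rootsOfUnity n K : Set Kˣ) := by
    ext x
    constructor
    · rintro ⟨hx, hxn⟩
      exact ⟨Units.mk0 x hx, (mem_rootsOfUnity' n _).mpr hxn, rfl⟩
    · rintro ⟨y, hy, rfl⟩
      exact ⟨y.ne_zero, (mem_rootsOfUnity' n y).mp hy⟩
  rw [image_rootsOfUnity, Set.ncard_image_of_injective _ Units.val_injective,
    ← Nat.card_units K]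
  exact IsCyclic.card_powMonoidHom_ker (G := Kˣ) n

theorem eq_or_eq_inv_of_add_inv_eq_add_inv {K : Type*} [Field K] {x y : K} (hx : x ≠ 0)
    (hy : y ≠ 0) (h : x + x⁻¹ = y + y⁻¹) : x = y ∨ x = y⁻¹ := by
  have factored : (x - y) * (x - y⁻¹) = 0 := by
    linear_combination x * h - mul_inv_cancel₀ hx + mul_inv_cancel₀ hy
  exact (mul_eq_zero.mp factored).imp sub_eq_zero.mp sub_eq_zero.mp

section FieldExtension

variable {F E : Type*} [Field F] [Field E] [Algebra F E]

theorem map_map_eq_self_of_add_inv_mem_range (σ : E →ₐ[F] E) {t : E}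
    (h : t + t⁻¹ ∈ (algebraMap F E).range) : σ (σ t) = t := by
  obtain rfl | ht := eq_or_ne t 0
  · simp only [map_zero]
  obtain ⟨d, hd⟩ := h
  have trace_fixed : σ t + (σ t)⁻¹ = t + t⁻¹ := by
    rw [← map_inv₀, ← map_add, ← hd, AlgHom.commutes]
  rcases eq_or_eq_inv_of_add_inv_eq_add_inv ((map_ne_zero σ).mpr ht) ht trace_fixed
    with fixed | inverted
  · rw [fixed, fixed]
  · rw [inverted, map_inv₀, inverted, inv_inv]

theorem sq_eq_sq_of_eq_smul (τ : E →ₗ[F] E) {u v : E} (hu : u * τ u = 1) (hv : v * τ v = 1)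
    {c : F} (h : v = c • u) : u ^ 2 = v ^ 2 := by
  have scalar_sq : algebraMap F E c ^ 2 = 1 := by
    rw [h, map_smul, Algebra.smul_def, Algebra.smul_def] at hv
    linear_combination hv - algebraMap F E c ^ 2 * hu
  rw [h, Algebra.smul_def, mul_pow, scalar_sq, one_mul]

theorem div_add_inv_mem_range_of_smul_add_eq_zero (τ : E →ₗ[F] E) {u v w : E}
    (hu : u * τ u = 1) (hv : v * τ v = 1) (hw : w * τ w = 1) {a b c : F} (ha : a ≠ 0)
    (hb : b ≠ 0) (h : a • u + b • v + c • w = 0) :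
    u / v + (u / v)⁻¹ ∈ (algebraMap F E).range := by
  have image_relation : a • τ u + b • τ v + c • τ w = 0 := by
    simpa only [map_add, map_smul, map_zero] using congrArg τ h
  have inv_u : u⁻¹ = τ u := inv_eq_of_mul_eq_one_right hu
  have inv_v : v⁻¹ = τ v := inv_eq_of_mul_eq_one_right hv
  refine ⟨(c ^ 2 - a ^ 2 - b ^ 2) / (a * b), ?_⟩
  simp only [Algebra.smul_def] at h image_relation
  rw [map_div₀, div_eq_iff ((map_ne_zero _).mpr (mul_ne_zero ha hb)), inv_div, div_eq_mul_inv u,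
    div_eq_mul_inv v, inv_u, inv_v]
  simp only [map_sub, map_mul, map_pow]
  set A := algebraMap F E a
  set B := algebraMap F E b
  set C := algebraMap F E c
  have product : (A * u + B * v) * (A * τ u + B * τ v) = C ^ 2 := by
    rw [eq_neg_of_add_eq_zero_left h, eq_neg_of_add_eq_zero_left image_relation]
    linear_combination C ^ 2 * hw
  linear_combination A ^ 2 * hu + B ^ 2 * hv - product

theorem eq_zero_or_eq_zero_of_smul_add_eq_zero (σ : E →ₐ[F] E) {u v w : E}
    (hu : u * σ (σ u) = 1) (hv : v * σ (σ v) = 1) (hw : w * σ (σ w) = 1)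
    (huv : u ^ 2 ≠ v ^ 2) {a b c : F} (h : a • u + b • v + c • w = 0) : a = 0 ∨ b = 0 := by
  by_contra! hab
  have ratio_norm : u / v * σ (σ (u / v)) = 1 := by
    rw [map_div₀, map_div₀, div_mul_div_comm, hu, hv, div_one]
  have ratio_fixed : σ (σ (u / v)) = u / v :=
    map_map_eq_self_of_add_inv_mem_range σ <|
      div_add_inv_mem_range_of_smul_add_eq_zero (σ.comp σ).toLinearMap hu hv hw hab.1 hab.2 h
  have ratio_sq : u ^ 2 / v ^ 2 = 1 := by rwa [ratio_fixed, ← sq, div_pow] at ratio_norm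
  exact huv (eq_of_div_eq_one ratio_sq)

theorem linearIndependent_triple_of_mul_map_map_eq_one (σ : E →ₐ[F] E) {u v w : E}
    (hu : u * σ (σ u) = 1) (hv : v * σ (σ v) = 1) (hw : w * σ (σ w) = 1)
    (huv : u ^ 2 ≠ v ^ 2) (huw : u ^ 2 ≠ w ^ 2) (hvw : v ^ 2 ≠ w ^ 2) :
    LinearIndependent F ![u, v, w] := by
  rw [Fintype.linearIndependent_iff]
  intro g hg
  simp only [Fin.sum_univ_three, Matrix.cons_val] at hg
  have hu0 : u ≠ 0 := left_ne_zero_of_mul_eq_one hu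
  have hv0 : v ≠ 0 := left_ne_zero_of_mul_eq_one hv
  have hw0 : w ≠ 0 := left_ne_zero_of_mul_eq_one hw
  have g01 : g 0 = 0 ∨ g 1 = 0 := eq_zero_or_eq_zero_of_smul_add_eq_zero σ hu hv hw huv hg
  have g02 : g 0 = 0 ∨ g 2 = 0 :=
    eq_zero_or_eq_zero_of_smul_add_eq_zero σ hu hw hv huw (by rwa [add_right_comm])
  have g12 : g 1 = 0 ∨ g 2 = 0 :=
    eq_zero_or_eq_zero_of_smul_add_eq_zero σ hv hw hu hvw (by rwa [add_comm, ← add_assoc])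
  rw [Fin.forall_fin_succ, Fin.forall_fin_two]
  rcases g01 with h0 | h1 <;> rcases g02 with h0' | h2 <;> rcases g12 with h1' | h2' <;> simp_all

theorem mul_frobenius_frobenius_eq_one [Fintype F] {u : E}
    (hu : u ^ (Fintype.card F ^ 2 + 1) = 1) :
    u * FiniteField.frobeniusAlgHom F E (FiniteField.frobeniusAlgHom F E u) = 1 := by
  rwa [FiniteField.frobeniusAlgHom_apply, FiniteField.frobeniusAlgHom_apply, ← pow_mul, ← sq,
    ← pow_succ']

end FieldExtension

-- In odd characteristic `u` and `-u` both lie in `U` and span the same point, so distinct points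
-- have to be told apart by their squares; in characteristic two squaring is injective.
theorem norm_one_subgroup_is_ovoid_general (F E : Type*) [Field F] [Fintype F] [Field E]
    [Fintype E] [Algebra F E] (hE : Fintype.card E = Fintype.card F ^ 4) :
    let U : Set E := {u : E | u ≠ 0 ∧ u ^ (Fintype.card F ^ 2 + 1) = 1}
    U.ncard = Fintype.card F ^ 2 + 1 ∧
    (∀ u ∈ U, ∀ v ∈ U, u ^ 2 ≠ v ^ 2 → ∀ c : F, v ≠ c • u) ∧
    (∀ u ∈ U, ∀ v ∈ U, ∀ w ∈ U, u ^ 2 ≠ v ^ 2 → u ^ 2 ≠ w ^ 2 → v ^ 2 ≠ w ^ 2 →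
      LinearIndependent F ![u, v, w]) := by
  intro U
  let σ := FiniteField.frobeniusAlgHom F E
  have norm_one : ∀ u ∈ U, u * σ (σ u) = 1 := fun u hu ↦ mul_frobenius_frobenius_eq_one hu.2
  refine ⟨?_, fun u hu v hv huv c h ↦ huv ?_, fun u hu v hv w hw ↦ ?_⟩
  · have order_dvd : Fintype.card F ^ 2 + 1 ∣ Nat.card E - 1 := by
      rw [Nat.card_eq_fintype_card, hE]
      exact ⟨Fintype.card F ^ 2 - 1, by rw [← Nat.sq_sub_sq, ← pow_mul, one_pow]⟩
    rw [ncard_setOf_ne_zero_and_pow_eq_one, Nat.gcd_eq_right order_dvd]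
  · exact sq_eq_sq_of_eq_smul (σ.comp σ).toLinearMap (norm_one u hu) (norm_one v hv) h
  · exact linearIndependent_triple_of_mul_map_map_eq_one σ (norm_one u hu) (norm_one v hv)
      (norm_one w hw)

/-- For q = 2^s (s ≥ 2), view GF(q⁴) as a 4-dimensional GF(q)-vector
space and let U = { u ∈ GF(q⁴)^* : u^{q²+1} = 1 }, the subgroup of order q²+1.  Then U
has q²+1 elements, any two distinct elements of U are not GF(q)-proportional, and any
three distinct elements of U are linearly independent over GF(q); hence U determines an
ovoid in PG(3,q). -/
theorem norm_one_subgroup_is_ovoid {q s : ℕ} (hs : 2 ≤ s) (hq : q = 2 ^ s)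
    (F E : Type) [Field F] [Fintype F] [Field E] [Fintype E] [Algebra F E]
    (hF : Fintype.card F = q) (hE : Fintype.card E = q ^ 4) :
    let U : Set E := {u : E | u ≠ 0 ∧ u ^ (q ^ 2 + 1) = 1}
    U.ncard = q ^ 2 + 1 ∧
    (∀ u ∈ U, ∀ v ∈ U, u ≠ v → ∀ c : F, v ≠ c • u) ∧
    (∀ u ∈ U, ∀ v ∈ U, ∀ w ∈ U, u ≠ v → u ≠ w → v ≠ w →
      LinearIndependent F ![u, v, w]) := by
  subst hF
  have : CharP E 2 := charP_of_card_eq_prime_pow (f := s * 4) (by rw [hE, hq, pow_mul])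
  simpa only [ne_eq, CharTwo.sq_inj] using norm_one_subgroup_is_ovoid_general F E hE
end

section
/- Let q ≥ 4 be a prime power and let C be a linear code over GF(q) with parameters [q²+1, 4, q²−q]. Let B be the collection of distinct supports of codewords of C of Hamming weight q²−q (each support being a subset of the coordinate set of size q²+1). Then every member of B has cardinality q²−q, and for every 3-element subset T of the coordinate set, the number of members of B containing T equals (q−2)(q²−q−1); that is, (coordinate set, B) is a 3-(q²+1, q²−q, (q−2)(q²−q−1)) design. -/
/-!
The first step is that the zero sets of the codewords of weight `q² - q` form an inversive plane,
that is, a 3-`(q² + 1, q + 1, 1)` design. Let `D` be the subcode of all codewords that vanish on a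
set `T` of coordinates. Its support has at most `q² + 1 - #T` elements, and averaging the weight
over `D` (the Plotkin bound) gives `(#T - 1) * #D ≤ q²`. Vanishing on `T` imposes at most `#T`
linear conditions, so `D` has dimension at least `4 - #T`. If `#T = 3` then `D` is therefore a
line, and all its nonzero codewords share one zero set. If `#T = 2` then `D` is a plane attaining
the Plotkin bound, so all its nonzero codewords have weight exactly `q² - q`.

The supports are the complements of the blocks of this plane, and inclusion-exclusion counts the
blocks that miss three given points.
-/

open Finset Module
open scoped FinsetFamily

section Designs

variable {α : Type*} [DecidableEq α]

/-- The blocks `P` form a `t`-`(v, k, l)` design, where `v` is the number of points. Blocks are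
not repeated, since `P` is a `Finset`. -/
structure IsDesign (t k l : ℕ) (P : Finset (Finset α)) : Prop where
  card_block : ∀ b ∈ P, #b = k
  card_filter_superset : ∀ T : Finset α, #T = t → #{b ∈ P | T ⊆ b} = l

theorem IsDesign.ncard_of_eq_image_coe {t k l : ℕ} {P : Finset (Finset α)} (hP : IsDesign t k l P)
    {B : Set (Set α)} (hB : B = (↑) '' (P : Set (Finset α))) :
    (∀ b ∈ B, b.ncard = k) ∧
      ∀ T : Finset α, #T = t → {b ∈ B | (T : Set α) ⊆ b}.ncard = l := by
  subst hB
  refine ⟨?_, fun T hT ↦ ?_⟩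
  · rintro _ ⟨b, hb, rfl⟩
    rw [Set.ncard_coe_finset, hP.card_block b hb]
  · have himage : {b ∈ ((↑) '' (P : Set (Finset α)) : Set (Set α)) | (T : Set α) ⊆ b} =
        (↑) '' (({b ∈ P | T ⊆ b} : Finset (Finset α)) : Set (Finset α)) := by
      ext b
      simp only [Set.mem_ofPred_eq, Set.mem_image, mem_coe, mem_filter]
      grind [coe_subset]
    rw [himage, Set.ncard_image_of_injective _ coe_injective, Set.ncard_coe_finset,
      hP.card_filter_superset T hT]

theorem card_filter_disjoint_eq_sum_powerset (P : Finset (Finset α)) (T : Finset α) :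
    (#{b ∈ P | Disjoint T b} : ℤ) = ∑ S ∈ T.powerset, (-1) ^ #S * (#{b ∈ P | S ⊆ b} : ℤ) := by
  have hblock (b : Finset α) : (if Disjoint T b then 1 else 0 : ℤ) =
      ∑ S ∈ T.powerset, if S ⊆ b then (-1) ^ #S else 0 := by
    have hpowerset : {S ∈ T.powerset | S ⊆ b} = (T ∩ b).powerset := by
      ext S
      simp only [mem_filter, mem_powerset, subset_inter_iff]
    rw [← sum_filter, hpowerset, sum_powerset_neg_one_pow_card]
    simp only [disjoint_iff_inter_eq_empty]
  calc
    (#{b ∈ P | Disjoint T b} : ℤ) = ∑ b ∈ P, ∑ S ∈ T.powerset, if S ⊆ b then (-1) ^ #S else 0 := by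
      rw [← sum_boole, sum_congr rfl fun b _ ↦ hblock b]
    _ = ∑ S ∈ T.powerset, ∑ b ∈ P, if S ⊆ b then (-1) ^ #S else 0 := sum_comm
    _ = ∑ S ∈ T.powerset, (-1) ^ #S * (#{b ∈ P | S ⊆ b} : ℤ) := by
      simp only [← sum_filter, sum_const, nsmul_eq_mul, mul_comm]

variable [Fintype α]

theorem IsDesign.of_succ {t k l m : ℕ} {P : Finset (Finset α)} (hP : IsDesign (t + 1) k l P)
    (htk : t < k) (hm : m * (k - t) = (Fintype.card α - t) * l) : IsDesign t k m P := by
  refine ⟨hP.card_block, fun T hT ↦ ?_⟩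
  have hflags : #{b ∈ P | T ⊆ b} * (k - t) = #Tᶜ * l := by
    refine card_mul_eq_card_mul (fun b x ↦ x ∈ b) (fun b hb ↦ ?_) fun x hx ↦ ?_
    · obtain ⟨hbP, hTb⟩ := mem_filter.1 hb
      have hsdiff : Tᶜ.bipartiteAbove (fun b x ↦ x ∈ b) b = b \ T := by
        ext x
        simp [bipartiteAbove, and_comm]
      rw [hsdiff, card_sdiff_of_subset hTb, hP.card_block b hbP, hT]
    · rw [mem_compl] at hx
      rw [← hP.card_filter_superset (insert x T) (by rw [card_insert_of_notMem hx, hT]),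
        bipartiteBelow, filter_filter]
      simp only [insert_subset_iff, and_comm]
  rw [card_compl, hT, ← hm] at hflags
  exact Nat.eq_of_mul_eq_mul_right (Nat.sub_pos_of_lt htk) hflags

theorem IsDesign.compls {t k m : ℕ} {l : ℕ → ℕ} {P : Finset (Finset α)}
    (hP : ∀ j ≤ t, IsDesign j k (l j) P)
    (hm : (m : ℤ) = ∑ j ∈ range (t + 1), (-1) ^ j * (t.choose j : ℤ) * l j) :
    IsDesign t (Fintype.card α - k) m Pᶜˢ := by
  refine ⟨fun b hb ↦ ?_, fun T hT ↦ ?_⟩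
  · rw [← (hP 0 t.zero_le).card_block _ (mem_compls.1 hb), card_compl,
      Nat.sub_sub_self (card_le_univ b)]
  · have hcompls : ({b ∈ Pᶜˢ | T ⊆ b} : Finset (Finset α)) = {b ∈ P | Disjoint T b}ᶜˢ := by
      ext b
      simp [mem_compls, disjoint_compl_right_iff]
    have hsum : (#{b ∈ P | Disjoint T b} : ℤ) = m := calc
      _ = ∑ S ∈ T.powerset, (-1) ^ #S * (l #S : ℤ) := by
        rw [card_filter_disjoint_eq_sum_powerset]
        refine sum_congr rfl fun S hS ↦ ?_
        have hSt : #S ≤ t := hT ▸ card_le_card (mem_powerset.1 hS)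
        rw [(hP _ hSt).card_filter_superset S rfl]
      _ = ∑ j ∈ range (t + 1), (t.choose j) • ((-1) ^ j * (l j : ℤ)) := by
        rw [sum_powerset_apply_card (fun j ↦ (-1) ^ j * (l j : ℤ)), hT]
      _ = m := by
        rw [hm]
        exact sum_congr rfl fun j _ ↦ by rw [nsmul_eq_mul]; ring
    rw [hcompls, card_compls]
    exact_mod_cast hsum

theorem IsDesign.compls_of_inversivePlane {q : ℕ} {P : Finset (Finset α)}
    (h3 : IsDesign 3 (q + 1) 1 P) (hq : 2 ≤ q) (hα : Fintype.card α = q ^ 2 + 1) :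
    IsDesign 3 (q ^ 2 - q) ((q - 2) * (q ^ 2 - q - 1)) Pᶜˢ := by
  have hqq : q * 2 ≤ q ^ 2 := by nlinarith
  have h2 : IsDesign 2 (q + 1) (q + 1) P := h3.of_succ (by omega) (by
    rw [hα]
    zify [show 2 ≤ q + 1 by omega, show 2 ≤ q ^ 2 + 1 by omega]
    ring)
  have h1 : IsDesign 1 (q + 1) (q * (q + 1)) P := h2.of_succ (by omega) (by
    rw [hα, Nat.add_sub_cancel, Nat.add_sub_cancel]
    ring)
  have h0 : IsDesign 0 (q + 1) (q * (q ^ 2 + 1)) P := h1.of_succ (by omega) (by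
    rw [hα, Nat.sub_zero, Nat.sub_zero]
    ring)
  have hcompls := IsDesign.compls (t := 3) (k := q + 1) (m := (q - 2) * (q ^ 2 - q - 1))
    (l := fun | 0 => q * (q ^ 2 + 1) | 1 => q * (q + 1) | 2 => q + 1 | _ => 1) (P := P)
    (fun j hj ↦ by interval_cases j <;> assumption) (by
      zify [hq, show q ≤ q ^ 2 by omega, show 1 ≤ q ^ 2 - q by omega]
      simp only [sum_range_succ, sum_range_zero, Nat.choose]
      push_cast
      ring)
  rwa [hα, Nat.add_sub_add_right] at hcompls

end Designs

section Codes

variable {F ι : Type*} [Field F]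

theorem card_mul_card_filter_apply_ne_zero [Fintype F] [DecidableEq F] {V : Type*}
    [AddCommGroup V] [Module F V] [Fintype V] {φ : V →ₗ[F] F} (hφ : φ ≠ 0) :
    Fintype.card F * #{v | φ v ≠ 0} = (Fintype.card F - 1) * Fintype.card V := by
  have hfiber (a : F) : #{v | φ v = a} = #{v | φ v = 0} :=
    AddMonoidHom.card_fiber_eq_of_mem_range φ (LinearMap.surjective hφ a) ⟨0, map_zero φ⟩
  have hcard : Fintype.card V = Fintype.card F * #{v | φ v = 0} := by
    rw [← card_univ, card_eq_sum_card_fiberwise (fun v _ ↦ mem_coe.2 (mem_univ (φ v))),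
      sum_congr rfl fun a _ ↦ hfiber a, sum_const, smul_eq_mul, card_univ]
  have hne : #{v | φ v ≠ 0} = (Fintype.card F - 1) * #{v | φ v = 0} := by
    rw [Nat.sub_one_mul, ← hcard, ← card_univ (α := V)]
    exact Nat.eq_sub_of_add_eq' (card_filter_add_card_filter_not (φ · = 0))
  rw [hne, hcard, mul_left_comm]

theorem sum_erase_zero_const [Fintype F] (V : Type*) [AddCommGroup V] [Module F V] [Fintype V]
    [DecidableEq V] (d : ℕ) :
    ∑ _v ∈ univ.erase (0 : V), d = (Fintype.card F ^ finrank F V - 1) * d := by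
  rw [sum_const, smul_eq_mul, card_erase_of_mem (mem_univ _), card_univ,
    card_eq_pow_finrank (K := F)]

open Classical in
/-- The support of a code: the coordinates at which some codeword is nonzero. -/
noncomputable def codeSupport [Fintype ι] (D : Submodule F (ι → F)) : Finset ι :=
  {i | ∃ c ∈ D, c i ≠ 0}

theorem mem_codeSupport [Fintype ι] {D : Submodule F (ι → F)} {i : ι} :
    i ∈ codeSupport D ↔ ∃ c ∈ D, c i ≠ 0 := by
  simp [codeSupport]

section Plotkin

variable [Fintype F] [DecidableEq F] [Fintype ι]

theorem card_mul_sum_hammingNorm (D : Submodule F (ι → F)) [Fintype D] :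
    Fintype.card F * ∑ c : D, hammingNorm (c : ι → F) =
      #(codeSupport D) * ((Fintype.card F - 1) * Fintype.card D) := by
  classical
  have hcoord (i : ι) : Fintype.card F * #{c : D | (c : ι → F) i ≠ 0} =
      if i ∈ codeSupport D then (Fintype.card F - 1) * Fintype.card D else 0 := by
    split_ifs with hi
    · obtain ⟨c, hcD, hci⟩ := mem_codeSupport.1 hi
      exact card_mul_card_filter_apply_ne_zero (φ := LinearMap.proj i ∘ₗ D.subtype)
        fun h ↦ hci (LinearMap.congr_fun h ⟨c, hcD⟩)
    · have hzero (c : D) : (c : ι → F) i = 0 := by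
        by_contra hci
        exact hi (mem_codeSupport.2 ⟨c, c.2, hci⟩)
      simp [hzero]
  have hswap : ∑ c : D, hammingNorm (c : ι → F) = ∑ i, #{c : D | (c : ι → F) i ≠ 0} :=
    sum_card_bipartiteAbove_eq_sum_card_bipartiteBelow fun (c : D) i ↦ (c : ι → F) i ≠ 0
  rw [hswap, mul_sum, sum_congr rfl fun i _ ↦ hcoord i, sum_ite_mem, univ_inter, sum_const,
    smul_eq_mul]

theorem card_mul_sum_erase_zero_hammingNorm (D : Submodule F (ι → F)) [Fintype D]
    [DecidableEq D] :
    Fintype.card F * ∑ c ∈ univ.erase (0 : D), hammingNorm (c : ι → F) =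
      #(codeSupport D) * ((Fintype.card F - 1) * Fintype.card F ^ finrank F D) := by
  rw [sum_erase univ (a := (0 : D)) hammingNorm_zero, card_mul_sum_hammingNorm,
    card_eq_pow_finrank (K := F) (V := D)]

variable {D : Submodule F (ι → F)} {d : ℕ}

theorem plotkin_bound (hd : ∀ c ∈ D, c ≠ 0 → d ≤ hammingNorm c) :
    Fintype.card F * ((Fintype.card F ^ finrank F D - 1) * d) ≤
      #(codeSupport D) * ((Fintype.card F - 1) * Fintype.card F ^ finrank F D) := by
  classical
  rw [← card_mul_sum_erase_zero_hammingNorm, ← sum_erase_zero_const]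
  gcongr with c hc
  exact hd c c.2 (by simpa using hc)

theorem hammingNorm_eq_of_le_plotkin_bound (hd : ∀ c ∈ D, c ≠ 0 → d ≤ hammingNorm c)
    (hD : #(codeSupport D) * ((Fintype.card F - 1) * Fintype.card F ^ finrank F D) ≤
      Fintype.card F * ((Fintype.card F ^ finrank F D - 1) * d))
    {c : ι → F} (hc : c ∈ D) (hc0 : c ≠ 0) : hammingNorm c = d := by
  classical
  have hle : ∀ c ∈ univ.erase (0 : D), d ≤ hammingNorm (c : ι → F) :=
    fun c hc ↦ hd c c.2 (by simpa using hc)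
  rw [← card_mul_sum_erase_zero_hammingNorm, ← sum_erase_zero_const] at hD
  have hsum := le_antisymm (sum_le_sum hle) (Nat.le_of_mul_le_mul_left hD Fintype.card_pos)
  exact ((sum_eq_sum_iff_of_le hle).1 hsum ⟨c, hc⟩ (by simpa using hc0)).symm

end Plotkin

/-- The subcode of `C` of all codewords vanishing on `T`. Unlike the usual shortened code, it
keeps the coordinates in `T`. -/
def shortening (C : Submodule F (ι → F)) (T : Finset ι) : Submodule F (ι → F) :=
  C ⊓ (LinearMap.funLeft F F ((↑) : T → ι)).ker

theorem mem_shortening {C : Submodule F (ι → F)} {T : Finset ι} {c : ι → F} :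
    c ∈ shortening C T ↔ c ∈ C ∧ ∀ i ∈ T, c i = 0 := by
  simp [shortening, funext_iff, LinearMap.funLeft_apply]

theorem finrank_le_finrank_shortening_add_card [Finite ι] (C : Submodule F (ι → F))
    (T : Finset ι) : finrank F C ≤ finrank F (shortening C T) + #T := by
  set restrict := (LinearMap.funLeft F F ((↑) : T → ι)).domRestrict C
  have hker : finrank F restrict.ker = finrank F (shortening C T) := by
    rw [shortening, ← Submodule.map_comap_subtype, Submodule.finrank_map_subtype_eq,
      LinearMap.ker_domRestrict]
  have hrange : finrank F restrict.range ≤ #T := by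
    simpa using restrict.range.finrank_le
  have := restrict.finrank_range_add_finrank_ker
  omega

theorem card_codeSupport_shortening_add_card_le [Fintype ι] (C : Submodule F (ι → F))
    (T : Finset ι) : #(codeSupport (shortening C T)) + #T ≤ Fintype.card ι := by
  classical
  rw [← card_union_of_disjoint]
  · exact card_le_univ _
  · refine disjoint_left.2 fun i hi hiT ↦ ?_
    obtain ⟨c, hc, hci⟩ := mem_codeSupport.1 hi
    exact hci ((mem_shortening.1 hc).2 i hiT)

end Codes

section ZeroSets

variable {F ι : Type*} [Field F] [DecidableEq F] [Fintype ι]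

/-- The set of coordinates at which the word `c` vanishes. -/
def zeroSet (c : ι → F) : Finset ι := {i | c i = 0}

theorem zeroSet_smul {a : F} (ha : a ≠ 0) (c : ι → F) : zeroSet (a • c) = zeroSet c := by
  simp [zeroSet, ha]

theorem card_zeroSet (c : ι → F) : #(zeroSet c) = Fintype.card ι - hammingNorm c := by
  have := card_filter_add_card_filter_not (s := univ) (fun i ↦ c i = 0)
  rw [card_univ] at this
  exact Nat.eq_sub_of_add_eq this

variable [Fintype F] [DecidableEq ι]

open Classical in
/-- The distinct zero sets of the codewords of `C` of weight `w`; their complements are the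
supports of these codewords. -/
noncomputable def zeroSets (C : Submodule F (ι → F)) (w : ℕ) : Finset (Finset ι) :=
  ({c | c ∈ C ∧ hammingNorm c = w} : Finset (ι → F)).image zeroSet

theorem mem_zeroSets {C : Submodule F (ι → F)} {w : ℕ} {Z : Finset ι} :
    Z ∈ zeroSets C w ↔ ∃ c ∈ C, hammingNorm c = w ∧ zeroSet c = Z := by
  simp [zeroSets, and_assoc]

theorem setOf_support_eq_image_compls_zeroSets (C : Submodule F (ι → F)) (w : ℕ) :
    {b : Set ι | ∃ c ∈ C, hammingNorm c = w ∧ b = {i | c i ≠ 0}} =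
      (↑) '' (((zeroSets C w)ᶜˢ : Finset (Finset ι)) : Set (Finset ι)) := by
  have hcompl (c : ι → F) : (((zeroSet c)ᶜ : Finset ι) : Set ι) = {i | c i ≠ 0} := by
    ext i
    simp [zeroSet]
  ext b
  simp only [Set.mem_ofPred_eq, Set.mem_image, mem_coe, mem_compls, mem_zeroSets]
  constructor
  · rintro ⟨c, hc, hw, rfl⟩
    exact ⟨(zeroSet c)ᶜ, ⟨c, hc, hw, (compl_compl _).symm⟩, hcompl c⟩
  · rintro ⟨Z, ⟨c, hc, hw, hZ⟩, rfl⟩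
    exact ⟨c, hc, hw, by rw [← hcompl, hZ, compl_compl]⟩

end ZeroSets

section OvoidCodes

variable {F ι : Type*} [Field F] [Fintype F] [DecidableEq F] [Fintype ι]

/-- `C` is an ovoid code: a `[q² + 1, 4, q² - q]` code over a field with `q` elements. The minimum
distance is encoded as a lower bound on the weights of the nonzero codewords. -/
structure IsOvoidCode (q : ℕ) (C : Submodule F (ι → F)) : Prop where
  card_field : Fintype.card F = q
  card_coord : Fintype.card ι = q ^ 2 + 1
  finrank_eq : finrank F C = 4
  le_hammingNorm : ∀ c ∈ C, c ≠ 0 → q ^ 2 - q ≤ hammingNorm c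

namespace IsOvoidCode

variable {q : ℕ} {C : Submodule F (ι → F)}

theorem two_le (hC : IsOvoidCode q C) : 2 ≤ q :=
  hC.card_field ▸ Fintype.one_lt_card

theorem le_hammingNorm_shortening (hC : IsOvoidCode q C) (T : Finset ι) :
    ∀ c ∈ shortening C T, c ≠ 0 → q * (q - 1) ≤ hammingNorm c := fun c hc ↦ by
  rw [Nat.mul_sub_one, ← sq]
  exact hC.le_hammingNorm c (mem_shortening.1 hc).1

theorem card_mul_pow_finrank_shortening_le (hC : IsOvoidCode q C) (T : Finset ι) :
    #T * q ^ finrank F (shortening C T) ≤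
      q ^ finrank F (shortening C T) + q ^ 2 := by
  have hplotkin := plotkin_bound (hC.le_hammingNorm_shortening T)
  have hsupport := card_codeSupport_shortening_add_card_le C T
  rw [hC.card_field] at hplotkin
  rw [hC.card_coord] at hsupport
  set s := #(codeSupport (shortening C T))
  set A := q ^ finrank F (shortening C T)
  have hA1 : 1 ≤ A := Nat.one_le_pow _ _ (by have := hC.two_le; omega)
  have hcancel : q ^ 2 * (A - 1) ≤ s * A := by
    refine Nat.le_of_mul_le_mul_left (c := q - 1) ?_ (by have := hC.two_le; omega)
    calc
      (q - 1) * (q ^ 2 * (A - 1)) = q * ((A - 1) * (q * (q - 1))) := by ring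
      _ ≤ s * ((q - 1) * A) := hplotkin
      _ = (q - 1) * (s * A) := by ring
  zify [hA1] at hcancel hsupport ⊢
  nlinarith

theorem finrank_shortening_eq_two (hC : IsOvoidCode q C) {T : Finset ι} (hT : #T = 2) :
    finrank F (shortening C T) = 2 := by
  have hlower := finrank_le_finrank_shortening_add_card C T
  have hupper := hC.card_mul_pow_finrank_shortening_le T
  rw [hC.finrank_eq, hT] at hlower
  rw [hT] at hupper
  have := (Nat.pow_le_pow_iff_right (n := finrank F (shortening C T)) (m := 2) hC.two_le).1
    (by linarith)
  omega

theorem finrank_shortening_eq_one (hC : IsOvoidCode q C) {T : Finset ι} (hT : #T = 3) :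
    finrank F (shortening C T) = 1 := by
  have hlower := finrank_le_finrank_shortening_add_card C T
  have hupper := hC.card_mul_pow_finrank_shortening_le T
  rw [hC.finrank_eq, hT] at hlower
  rw [hT] at hupper
  have hpos : 0 < q ^ 2 := pow_pos (by have := hC.two_le; omega) 2
  have := (Nat.pow_lt_pow_iff_right (n := finrank F (shortening C T)) (m := 2) hC.two_le).1
    (by linarith)
  omega

theorem hammingNorm_eq_of_card_eq_two (hC : IsOvoidCode q C) {T : Finset ι} (hT : #T = 2)
    {c : ι → F} (hc : c ∈ shortening C T) (hc0 : c ≠ 0) : hammingNorm c = q ^ 2 - q := by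
  have hsupport : #(codeSupport (shortening C T)) ≤ q ^ 2 - 1 := by
    have := card_codeSupport_shortening_add_card_le C T
    rw [hC.card_coord, hT] at this
    omega
  rw [sq, ← Nat.mul_sub_one]
  refine hammingNorm_eq_of_le_plotkin_bound (hC.le_hammingNorm_shortening T) ?_ hc hc0
  rw [hC.card_field, hC.finrank_shortening_eq_two hT]
  calc
    _ ≤ (q ^ 2 - 1) * ((q - 1) * q ^ 2) := by gcongr
    _ = q * ((q ^ 2 - 1) * (q * (q - 1))) := by ring

theorem isDesign_zeroSets [DecidableEq ι] (hC : IsOvoidCode q C) :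
    IsDesign 3 (q + 1) 1 (zeroSets C (q ^ 2 - q)) := by
  have hqq : q + q ≤ q ^ 2 := by nlinarith [hC.two_le]
  refine ⟨fun Z hZ ↦ ?_, fun T hT ↦ ?_⟩
  · obtain ⟨c, -, hw, rfl⟩ := mem_zeroSets.1 hZ
    rw [card_zeroSet, hC.card_coord, hw]
    omega
  obtain ⟨⟨c, hcT⟩, hc0, hspan⟩ := finrank_eq_one_iff'.1 (hC.finrank_shortening_eq_one hT)
  obtain ⟨hc, hvanish⟩ := mem_shortening.1 hcT
  have hweight : hammingNorm c = q ^ 2 - q := by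
    obtain ⟨S, hST, hS⟩ := exists_subset_card_eq (show 2 ≤ #T by omega)
    exact hC.hammingNorm_eq_of_card_eq_two hS
      (mem_shortening.2 ⟨hc, fun i hi ↦ hvanish i (hST hi)⟩) (by simpa using hc0)
  refine card_eq_one.2 ⟨zeroSet c, eq_singleton_iff_unique_mem.2 ⟨?_, fun Z hZ ↦ ?_⟩⟩
  · exact mem_filter.2 ⟨mem_zeroSets.2 ⟨c, hc, hweight, rfl⟩, fun i hi ↦ by
      simpa [zeroSet] using hvanish i hi⟩
  · obtain ⟨hZ, hTZ⟩ := mem_filter.1 hZ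
    obtain ⟨d, hd, hw, rfl⟩ := mem_zeroSets.1 hZ
    have hdT : d ∈ shortening C T :=
      mem_shortening.2 ⟨hd, fun i hi ↦ by simpa [zeroSet] using hTZ hi⟩
    obtain ⟨a, ha⟩ := hspan ⟨d, hdT⟩
    obtain rfl : a • c = d := congrArg Subtype.val ha
    refine zeroSet_smul (fun ha0 ↦ ?_) c
    rw [ha0, zero_smul, hammingNorm_zero] at hw
    have := hC.two_le
    omega

end IsOvoidCode

end OvoidCodes

theorem supports_of_min_weight_codewords_form_design_general {F ι : Type*} [Field F] [Fintype F]
    [DecidableEq F] [Fintype ι] {q : ℕ} {C : Submodule F (ι → F)} (hC : IsOvoidCode q C) :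
    let B : Set (Set ι) := {b | ∃ c ∈ C, hammingNorm c = q ^ 2 - q ∧ b = {i | c i ≠ 0}}
    (∀ b ∈ B, b.ncard = q ^ 2 - q) ∧
    (∀ T : Finset ι, T.card = 3 → {b ∈ B | ↑T ⊆ b}.ncard = (q - 2) * (q ^ 2 - q - 1)) := by
  classical
  have hdesign := hC.isDesign_zeroSets.compls_of_inversivePlane hC.two_le hC.card_coord
  exact hdesign.ncard_of_eq_image_coe (setOf_support_eq_image_compls_zeroSets C _)

/-- For a [q²+1, 4, q²−q] code C over GF(q), q ≥ 4 a prime power, the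
distinct supports of the codewords of weight q²−q form a
3-(q²+1, q²−q, (q−2)(q²−q−1)) design. -/
theorem supports_of_min_weight_codewords_form_design {q : ℕ}
    (F : Type) [Field F] [Fintype F] [DecidableEq F]
    (hF : Fintype.card F = q) (hq : 4 ≤ q)
    (C : Submodule F (Fin (q ^ 2 + 1) → F))
    (hdim : Module.finrank F C = 4)
    (hlb : ∀ c ∈ C, c ≠ 0 → q ^ 2 - q ≤ hammingNorm c)
    (hex : ∃ c ∈ C, c ≠ 0 ∧ hammingNorm c = q ^ 2 - q) :
    let B : Set (Set (Fin (q ^ 2 + 1))) :=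
      {b | ∃ c ∈ C, hammingNorm c = q ^ 2 - q ∧ b = {i | c i ≠ 0}}
    (∀ b ∈ B, b.ncard = q ^ 2 - q) ∧
    (∀ T : Finset (Fin (q ^ 2 + 1)), T.card = 3 →
      {b ∈ B | ↑T ⊆ b}.ncard = (q - 2) * (q ^ 2 - q - 1)) :=
  supports_of_min_weight_codewords_form_design_general
    ⟨hF, Fintype.card_fin _, hdim, hlb⟩
end

section
/- Let q ≥ 4 be a prime power and let C be a linear code over GF(q) with parameters [q²+1, 4, q²−q]. Let B be the collection of distinct supports of codewords of C of Hamming weight q²−q, and let B^c = { complement of B in the coordinate set : B ∈ B }. Then every member of B^c has cardinality q+1, and for every 3-element subset T of the coordinate set there is exactly one member of B^c containing T; that is, (coordinate set, B^c) is a 3-(q²+1, q+1, 1) Steiner system (an inversive plane). -/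
/-!
Write `q = |F|` and suppose every nonzero codeword has at most `m` zeros. A position lies in the
zero set of exactly one of the `q + 1` members of a pencil `{d} ∪ {c + a • d | a ∈ F}`, unless `c`
and `d` both vanish there, when it lies in all of them. If `c` and `d` are independent, counting
zeros thus gives `n + q * s ≤ |zeros c| + q * m` when they have `s` common zeros. In length
`n = (q + 1) * m - q * s`, having `s` common zeros therefore forces `c` to have exactly `m` zeros,
while having `s + 1` is impossible. In dimension at least `s + 2`, any `s + 1` positions are zeros
of some nonzero codeword, which therefore has exactly `m` zeros and is unique up to a scalar. The
case `s = 2`, `m = q + 1` is that of ovoids and inversive planes; `s = 1` is that of maximal arcs.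
-/

open Finset

/-- `B` is the block set of a Steiner system `S(t, k, v)`, where `v` is the cardinality of `ι`:
all blocks have `k` points and any `t` points lie in exactly one block. -/
structure IsSteinerSystem {ι : Type*} (t k : ℕ) (B : Set (Set ι)) : Prop where
  ncard_eq : ∀ b ∈ B, b.ncard = k
  existsUnique_superset : ∀ T : Finset ι, #T = t → ∃! b, b ∈ B ∧ ↑T ⊆ b

theorem IsSteinerSystem.ncard_setOf_superset {ι : Type*} {t k : ℕ} {B : Set (Set ι)}
    (hB : IsSteinerSystem t k B) {T : Finset ι} (hT : #T = t) : {b ∈ B | ↑T ⊆ b}.ncard = 1 := by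
  obtain ⟨b, hb, hunique⟩ := hB.existsUnique_superset T hT
  exact Set.ncard_eq_one.mpr ⟨b, Set.eq_singleton_iff_unique_mem.mpr ⟨hb, hunique⟩⟩

section ZeroCoords

variable {ι F : Type*} [Fintype ι] [DecidableEq F]

/-- The complement of the support of a word: the positions where it vanishes. -/
def zeroCoords [Zero F] (c : ι → F) : Finset ι := {i | c i = 0}

@[simp]
theorem mem_zeroCoords [Zero F] {c : ι → F} {i : ι} : i ∈ zeroCoords c ↔ c i = 0 := by
  simp [zeroCoords]

theorem coe_zeroCoords [Zero F] (c : ι → F) : (zeroCoords c : Set ι) = {i | c i ≠ 0}ᶜ := by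
  ext i
  simp

theorem card_zeroCoords_add_hammingNorm [Zero F] (c : ι → F) :
    #(zeroCoords c) + hammingNorm c = Fintype.card ι :=
  card_filter_add_card_filter_not fun i ↦ c i = 0

theorem zeroCoords_smul [Field F] {a : F} (ha : a ≠ 0) (c : ι → F) :
    zeroCoords (a • c) = zeroCoords c := by
  ext i
  simp [ha]

theorem card_setOf_add_mul_eq_zero [Field F] [Fintype F] (x y : F) :
    #{a : F | x + a * y = 0} + (if y = 0 then 1 else 0) =
      1 + Fintype.card F * (if x = 0 ∧ y = 0 then 1 else 0) := by
  by_cases hy : y = 0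
  · by_cases hx : x = 0 <;> simp [hx, hy, add_comm]
  · have hroot (a : F) : x + a * y = 0 ↔ a = -x / y := by
      rw [eq_div_iff hy, eq_neg_iff_add_eq_zero, add_comm]
    simp [hroot, hy, filter_eq']

theorem sum_card_zeroCoords_add_smul [Field F] [Fintype F] (c d : ι → F) :
    ∑ a : F, #(zeroCoords (c + a • d)) + #(zeroCoords d) =
      Fintype.card ι + Fintype.card F * #{i | c i = 0 ∧ d i = 0} := by
  calc
    _ = ∑ i, (#{a : F | c i + a * d i = 0} + if d i = 0 then 1 else 0) := by
      simp only [zeroCoords, card_filter, Pi.add_apply, Pi.smul_apply, smul_eq_mul]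
      rw [sum_comm, sum_add_distrib]
    _ = ∑ i, (1 + Fintype.card F * if c i = 0 ∧ d i = 0 then 1 else 0) :=
      sum_congr rfl fun i _ ↦ card_setOf_add_mul_eq_zero (c i) (d i)
    _ = _ := by
      rw [sum_add_distrib, ← mul_sum, ← card_filter, sum_const, card_univ, smul_eq_mul, mul_one]

end ZeroCoords

section Code

variable {ι F : Type*} [Fintype ι] [Field F] [DecidableEq F] {C : Submodule F (ι → F)}

theorem exists_mem_ne_zero_subset_zeroCoords {T : Finset ι} (hT : #T < Module.finrank F C) :
    ∃ c ∈ C, c ≠ 0 ∧ T ⊆ zeroCoords c := by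
  let restriction : C →ₗ[F] T → F := LinearMap.funLeft F F Subtype.val ∘ₗ C.subtype
  have hker : LinearMap.ker restriction ≠ ⊥ :=
    LinearMap.ker_ne_bot_of_finrank_lt (by simpa using hT)
  obtain ⟨c, hc, hc0⟩ := Submodule.exists_mem_ne_zero_of_ne_bot hker
  exact ⟨c, c.2, by simpa using hc0, fun i hi ↦ mem_zeroCoords.mpr (congrFun hc ⟨i, hi⟩)⟩

/-- The complements of the supports of the codewords of weight `w` in `C`. As a set of sets, it
contains the common complement of proportional codewords only once. -/
def supportComplements (C : Submodule F (ι → F)) (w : ℕ) : Set (Set ι) :=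
  {b | ∃ c ∈ C, hammingNorm c = w ∧ b = {i | c i ≠ 0}ᶜ}

theorem mem_supportComplements_iff {w m : ℕ} (hn : Fintype.card ι = w + m) {b : Set ι} :
    b ∈ supportComplements C w ↔ ∃ c ∈ C, #(zeroCoords c) = m ∧ b = zeroCoords c := by
  refine exists_congr fun c ↦ and_congr_right fun _ ↦ and_congr ?_ (by rw [coe_zeroCoords])
  have := card_zeroCoords_add_hammingNorm c
  lia

variable [Fintype F] {m : ℕ} {c d : ι → F} {S : Finset ι}

theorem card_add_mul_card_le_of_notMem_span (hm : ∀ c ∈ C, c ≠ 0 → #(zeroCoords c) ≤ m)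
    (hc : c ∈ C) (hd : d ∈ C) (hd0 : d ≠ 0) (hcd : c ∉ Submodule.span F {d})
    (hSc : S ⊆ zeroCoords c) (hSd : S ⊆ zeroCoords d) :
    Fintype.card ι + Fintype.card F * #S ≤ #(zeroCoords c) + Fintype.card F * m := by
  have hpencil (a : F) : c + a • d ≠ 0 := fun h ↦
    hcd (Submodule.mem_span_singleton.mpr ⟨-a, by rw [neg_smul, ← eq_neg_of_add_eq_zero_left h]⟩)
  have hS : #S ≤ #{i | c i = 0 ∧ d i = 0} := card_le_card fun i hi ↦ by
    simpa using And.intro (mem_zeroCoords.mp (hSc hi)) (mem_zeroCoords.mp (hSd hi))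
  have hsum : ∑ a ∈ univ.erase (0 : F), #(zeroCoords (c + a • d)) ≤ (Fintype.card F - 1) * m := by
    simpa [card_erase_of_mem] using sum_le_card_nsmul (univ.erase (0 : F)) _ m fun a _ ↦
      hm _ (C.add_mem hc (C.smul_mem a hd)) (hpencil a)
  calc
    _ ≤ Fintype.card ι + Fintype.card F * #{i | c i = 0 ∧ d i = 0} := by gcongr
    _ = #(zeroCoords c) + ∑ a ∈ univ.erase (0 : F), #(zeroCoords (c + a • d))
        + #(zeroCoords d) := by
      rw [← sum_card_zeroCoords_add_smul, ← add_sum_erase univ _ (mem_univ 0), zero_smul, add_zero]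
    _ ≤ #(zeroCoords c) + (Fintype.card F - 1) * m + m := by gcongr; exact hm d hd hd0
    _ = _ := by rw [add_assoc, ← Nat.succ_mul, Nat.succ_eq_add_one,
      Nat.sub_add_cancel Fintype.card_pos]

theorem card_add_mul_card_le_of_lt_finrank (hm : ∀ c ∈ C, c ≠ 0 → #(zeroCoords c) ≤ m)
    (hc : c ∈ C) (hc0 : c ≠ 0) (hSc : S ⊆ zeroCoords c) (hS : #S + 1 < Module.finrank F C) :
    Fintype.card ι + Fintype.card F * #S ≤ #(zeroCoords c) + Fintype.card F * m := by
  obtain ⟨l, hl⟩ := Function.ne_iff.mp hc0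
  have hlS : l ∉ S := fun h ↦ hl (mem_zeroCoords.mp (hSc h))
  obtain ⟨d, hd, hd0, hSd⟩ := exists_mem_ne_zero_subset_zeroCoords (C := C) (T := S.cons l hlS)
    (by rwa [card_cons])
  obtain ⟨hdl, hSd⟩ := cons_subset.mp hSd
  refine card_add_mul_card_le_of_notMem_span hm hc hd hd0 (fun hcd ↦ ?_) hSc hSd
  obtain ⟨a, rfl⟩ := Submodule.mem_span_singleton.mp hcd
  simp [mem_zeroCoords.mp hdl] at hl

theorem zeroCoords_eq_of_mul_lt (hm : ∀ c ∈ C, c ≠ 0 → #(zeroCoords c) ≤ m)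
    (hc : c ∈ C) (hc0 : c ≠ 0) (hd : d ∈ C) (hd0 : d ≠ 0)
    (hSc : S ⊆ zeroCoords c) (hSd : S ⊆ zeroCoords d)
    (hlt : (Fintype.card F + 1) * m < Fintype.card ι + Fintype.card F * #S) :
    zeroCoords c = zeroCoords d := by
  have hcd : c ∈ Submodule.span F {d} := by
    by_contra hcd
    have hle := card_add_mul_card_le_of_notMem_span hm hc hd hd0 hcd hSc hSd
    linarith [hm c hc hc0]
  obtain ⟨a, rfl⟩ := Submodule.mem_span_singleton.mp hcd
  exact zeroCoords_smul (left_ne_zero_of_smul hc0) d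

theorem complements_of_supports_form_inversive_plane_general {s w : ℕ}
    (hn : Fintype.card ι = w + m) (hw : w + Fintype.card F * s = Fintype.card F * m)
    (hdim : s + 2 ≤ Module.finrank F C) (hmin : ∀ c ∈ C, c ≠ 0 → w ≤ hammingNorm c) :
    IsSteinerSystem (s + 1) m (supportComplements C w) := by
  have hm (c) (hc : c ∈ C) (hc0 : c ≠ 0) : #(zeroCoords c) ≤ m := by
    have := card_zeroCoords_add_hammingNorm c
    linarith [hmin c hc hc0]
  constructor
  · intro b hb
    obtain ⟨c, -, hcard, rfl⟩ := (mem_supportComplements_iff hn).mp hb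
    rw [Set.ncard_coe_finset, hcard]
  intro T hT
  obtain ⟨c, hc, hc0, hTc⟩ := exists_mem_ne_zero_subset_zeroCoords (C := C) (T := T) (by lia)
  have hcard : #(zeroCoords c) = m := by
    obtain ⟨S, hST, hS⟩ := exists_subset_card_eq (s := T) (n := s) (by lia)
    have hle := card_add_mul_card_le_of_lt_finrank hm hc hc0 (hST.trans hTc) (by lia)
    rw [hS] at hle
    linarith [hm c hc hc0]
  refine ⟨zeroCoords c, ⟨(mem_supportComplements_iff hn).mpr ⟨c, hc, hcard, rfl⟩, mod_cast hTc⟩, ?_⟩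
  rintro b ⟨hb, hTb⟩
  obtain ⟨d, hd, hdcard, rfl⟩ := (mem_supportComplements_iff hn).mp hb
  have hTd : T ⊆ zeroCoords d := mod_cast hTb
  have hd0 : d ≠ 0 := by
    have hnorm : hammingNorm d = hammingNorm c := by
      linarith [card_zeroCoords_add_hammingNorm c, card_zeroCoords_add_hammingNorm d]
    rwa [← hammingNorm_ne_zero_iff, hnorm, hammingNorm_ne_zero_iff]
  have hlt : (Fintype.card F + 1) * m < Fintype.card ι + Fintype.card F * #T := by
    rw [hT, hn]
    linarith [Fintype.card_pos (α := F)]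
  exact congrArg _ (zeroCoords_eq_of_mul_lt hm hd hd0 hc hc0 hTd hTc hlt)

end Code

/-- For a [q²+1, 4, q²−q] code C over GF(q), q ≥ 4 a prime power, the
complements of the distinct supports of the codewords of weight q²−q form a
3-(q²+1, q+1, 1) Steiner system (an inversive plane). -/
theorem complements_of_supports_form_inversive_plane {q : ℕ}
    (F : Type) [Field F] [Fintype F] [DecidableEq F]
    (hF : Fintype.card F = q) (hq : 4 ≤ q)
    (C : Submodule F (Fin (q ^ 2 + 1) → F))
    (hdim : Module.finrank F C = 4)
    (hlb : ∀ c ∈ C, c ≠ 0 → q ^ 2 - q ≤ hammingNorm c)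
    (hex : ∃ c ∈ C, c ≠ 0 ∧ hammingNorm c = q ^ 2 - q) :
    let Bc : Set (Set (Fin (q ^ 2 + 1))) :=
      {b | ∃ c ∈ C, hammingNorm c = q ^ 2 - q ∧ b = {i | c i ≠ 0}ᶜ}
    (∀ b ∈ Bc, b.ncard = q + 1) ∧
    (∀ T : Finset (Fin (q ^ 2 + 1)), T.card = 3 →
      {b ∈ Bc | ↑T ⊆ b}.ncard = 1) := by
  have hqq : q ^ 2 - q + q = q ^ 2 := Nat.sub_add_cancel (Nat.le_self_pow two_ne_zero q)
  have hB : IsSteinerSystem 3 (q + 1) (supportComplements C (q ^ 2 - q)) :=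
    complements_of_supports_form_inversive_plane_general (s := 2) (by rw [Fintype.card_fin]; lia)
      (by rw [hF]; linarith) hdim.ge hlb
  exact ⟨hB.ncard_eq, fun T hT ↦ hB.ncard_setOf_superset hT⟩
end

section
/- Let q > 2 be a prime power and let a ∈ GF(q) be such that the polynomial x² + x + a has no root in GF(q). Consider the set of vectors V = {(0,0,1,0)} ∪ {(x, y, x² + xy + a y², 1) : x, y ∈ GF(q)} in GF(q)^4. Then V consists of q²+1 vectors which are pairwise non-proportional over GF(q), and any three distinct vectors in V are linearly independent over GF(q); hence V spans an ovoid (the elliptic quadric) in PG(3,q). -/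
/-!
The vectors of `V` are singular for the quadratic form `Q = x² + xy + ay² - zt`, and its polar form
`B` does not vanish on any two distinct ones: two points with `t = 1` pair to minus the value of the
anisotropic form `x² + xy + ay²` at their difference. If `α u + β v + γ w = 0` with `u`, `v`, `w`
singular, then `0 = Q (-γ w) = Q (α u + β v) = α β B(u, v)`, so at most one coefficient is nonzero,
hence none is. The Gram determinant `2 B(u, v) B(v, w) B(u, w)` would give the same conclusion only
away from characteristic two.
-/

open QuadraticMap

section SingularVectors

variable {R M N : Type*} [CommRing R] [AddCommGroup M] [AddCommGroup N] [Module R M] [Module R N]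
  {Q : QuadraticMap R M N} {u v w : M}

lemma ne_smul_of_polar_ne_zero (hu : Q u = 0) (huv : polar Q u v ≠ 0) (c : R) : v ≠ c • u := by
  rintro rfl
  exact huv (by rw [polar_smul_right, polar_self, hu, smul_zero, smul_zero])

variable [NoZeroDivisors R] [Module.IsTorsionFree R N] {r s t : R}

lemma mul_eq_zero_of_smul_add_smul_add_smul_eq_zero (hu : Q u = 0) (hv : Q v = 0) (hw : Q w = 0)
    (huv : polar Q u v ≠ 0) (h : r • u + s • v + t • w = 0) : r * s = 0 := by
  have hsum : Q (r • u + s • v) = 0 := by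
    rw [eq_neg_of_add_eq_zero_left h, Q.map_neg, Q.map_smul, hw, smul_zero]
  have hpolar : (r * s) • polar Q u v = 0 := by
    simpa only [QuadraticMap.map_add, Q.map_smul, hu, hv, smul_zero, zero_add, polar_smul_left,
      polar_smul_right, smul_smul, mul_comm s] using hsum
  exact (smul_eq_zero.mp hpolar).resolve_right huv

lemma eq_zero_of_smul_add_smul_add_smul_eq_zero (hu : Q u = 0) (hv : Q v = 0) (hw : Q w = 0)
    (huv : polar Q u v ≠ 0) (huw : polar Q u w ≠ 0) (h : r • u + s • v + t • w = 0) : r = 0 := by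
  by_contra hr
  have hs : s = 0 :=
    (mul_eq_zero.mp (mul_eq_zero_of_smul_add_smul_add_smul_eq_zero hu hv hw huv h)).resolve_left hr
  have ht : t = 0 :=
    (mul_eq_zero.mp (mul_eq_zero_of_smul_add_smul_add_smul_eq_zero hu hw hv huw
      (by rwa [add_right_comm]))).resolve_left hr
  have hru : r • u = 0 := by simpa only [hs, ht, zero_smul, add_zero] using h
  have hpolar : r • polar Q u v = 0 := by rw [← polar_smul_left, hru, polar_zero_left]
  exact (smul_eq_zero.mp hpolar).elim hr huv

lemma linearIndependent_triple_of_polar_ne_zero (hu : Q u = 0) (hv : Q v = 0) (hw : Q w = 0)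
    (huv : polar Q u v ≠ 0) (huw : polar Q u w ≠ 0) (hvw : polar Q v w ≠ 0) :
    LinearIndependent R ![u, v, w] := by
  rw [Fintype.linearIndependent_iff]
  intro g hg
  have h : g 0 • u + g 1 • v + g 2 • w = 0 := by simpa [Fin.sum_univ_three] using hg
  have hvu : polar Q v u ≠ 0 := by rwa [polar_comm]
  have hwu : polar Q w u ≠ 0 := by rwa [polar_comm]
  have hwv : polar Q w v ≠ 0 := by rwa [polar_comm]
  have h₁ : g 1 • v + g 0 • u + g 2 • w = 0 := by rwa [add_comm (g 1 • v)]
  have h₂ : g 2 • w + g 0 • u + g 1 • v = 0 := by rwa [add_assoc, add_comm]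
  rw [Fin.forall_fin_succ, Fin.forall_fin_two]
  exact ⟨eq_zero_of_smul_add_smul_add_smul_eq_zero hu hv hw huv huw h,
    eq_zero_of_smul_add_smul_add_smul_eq_zero hv hu hw hvu hvw h₁,
    eq_zero_of_smul_add_smul_add_smul_eq_zero hw hu hv hwu hwv h₂⟩

end SingularVectors

section EllipticQuadric

variable {R : Type*} [CommRing R]

/-- The quadratic form `x² + xy + ay² - zt` in the coordinates `(x, y, z, t)`, on which all vectors
of `ellipticQuadric a` are singular. -/
def ellipticForm (a : R) : QuadraticForm R (Fin 4 → R) :=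
  proj 0 0 + proj 0 1 + a • proj 1 1 - proj 2 3

/-- The vector with `t = 1` spanning the affine point of the elliptic quadric above `(x, y)`. -/
def affinePoint (a x y : R) : Fin 4 → R :=
  ![x, y, x ^ 2 + x * y + a * y ^ 2, 1]

/-- The elliptic quadric, given by one spanning vector for each of its projective points: the point
at infinity `(0, 0, 1, 0)` and the affine points. -/
def ellipticQuadric (a : R) : Set (Fin 4 → R) :=
  insert ![0, 0, 1, 0] {w | ∃ x y : R, w = affinePoint a x y}

lemma ellipticForm_apply (a : R) (w : Fin 4 → R) :
    ellipticForm a w = w 0 * w 0 + w 0 * w 1 + a * (w 1 * w 1) - w 2 * w 3 :=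
  rfl

lemma ellipticForm_eq_zero_of_mem {a : R} {w : Fin 4 → R} (hw : w ∈ ellipticQuadric a) :
    ellipticForm a w = 0 := by
  obtain rfl | ⟨x, y, rfl⟩ := hw
  · simp [ellipticForm_apply]
  · simp only [ellipticForm_apply, affinePoint, Matrix.cons_val_zero, Matrix.cons_val_one,
      Matrix.cons_val]
    ring

lemma polar_ellipticForm_infinity_affinePoint (a x y : R) :
    polar (ellipticForm a) ![0, 0, 1, 0] (affinePoint a x y) = -1 := by
  simp [polar, ellipticForm_apply, affinePoint]

lemma polar_ellipticForm_affinePoint (a x y x' y' : R) :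
    polar (ellipticForm a) (affinePoint a x y) (affinePoint a x' y') =
      -((x - x') ^ 2 + (x - x') * (y - y') + a * (y - y') ^ 2) := by
  simp only [polar, ellipticForm_apply, affinePoint, Pi.add_apply, Matrix.cons_val_zero,
    Matrix.cons_val_one, Matrix.cons_val]
  ring

lemma affinePoint_injective (a : R) : Function.Injective fun p : R × R ↦ affinePoint a p.1 p.2 :=
  fun _ _ h ↦ Prod.ext (congrFun h 0) (congrFun h 1)

lemma encard_ellipticQuadric [Nontrivial R] (a : R) :
    (ellipticQuadric a).encard = ENat.card R ^ 2 + 1 := by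
  have hrange : {w | ∃ x y : R, w = affinePoint a x y} =
      Set.range fun p : R × R ↦ affinePoint a p.1 p.2 := by
    ext w
    simp [eq_comm]
  have hinfinity : ![0, 0, 1, 0] ∉ {w | ∃ x y : R, w = affinePoint a x y} := by
    rintro ⟨x, y, h⟩
    exact zero_ne_one (congrFun h 3)
  rw [ellipticQuadric, Set.encard_insert_of_notMem hinfinity, hrange, ← Set.image_univ,
    (affinePoint_injective a).encard_image, Set.encard_univ, ENat.card_prod, pow_two]

end EllipticQuadric

section Field

variable {F : Type*} [Field F] {a : F}

lemma eq_zero_of_sq_add_mul_add_mul_sq_eq_zero (ha : ∀ x : F, x ^ 2 + x + a ≠ 0) {x y : F}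
    (h : x ^ 2 + x * y + a * y ^ 2 = 0) : x = 0 ∧ y = 0 := by
  obtain rfl | hy := eq_or_ne y 0
  · simpa using h
  · refine absurd ?_ (ha (x / y))
    field_simp
    linear_combination h

lemma pairwise_polar_ellipticForm_ne_zero (ha : ∀ x : F, x ^ 2 + x + a ≠ 0) :
    (ellipticQuadric a).Pairwise fun u v ↦ polar (ellipticForm a) u v ≠ 0 := by
  rintro u (rfl | ⟨x, y, rfl⟩) v (rfl | ⟨x', y', rfl⟩) huv
  · exact absurd rfl huv
  · simp [polar_ellipticForm_infinity_affinePoint]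
  · simp [polar_comm _ (affinePoint a x y), polar_ellipticForm_infinity_affinePoint]
  · rw [polar_ellipticForm_affinePoint, neg_ne_zero]
    intro h
    obtain ⟨hx, hy⟩ := eq_zero_of_sq_add_mul_add_mul_sq_eq_zero ha h
    exact huv (by rw [sub_eq_zero.mp hx, sub_eq_zero.mp hy])

theorem elliptic_quadric_is_ovoid_general (ha : ∀ x : F, x ^ 2 + x + a ≠ 0) :
    (ellipticQuadric a).encard = ENat.card F ^ 2 + 1 ∧
    (∀ u ∈ ellipticQuadric a, ∀ v ∈ ellipticQuadric a, u ≠ v → ∀ c : F, v ≠ c • u) ∧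
    (∀ u ∈ ellipticQuadric a, ∀ v ∈ ellipticQuadric a, ∀ w ∈ ellipticQuadric a,
      u ≠ v → u ≠ w → v ≠ w → LinearIndependent F ![u, v, w]) := by
  have hpolar := pairwise_polar_ellipticForm_ne_zero ha
  refine ⟨encard_ellipticQuadric a, fun u hu v hv huv ↦ ?_, fun u hu v hv w hw huv huw hvw ↦ ?_⟩
  · exact ne_smul_of_polar_ne_zero (ellipticForm_eq_zero_of_mem hu) (hpolar hu hv huv)
  · exact linearIndependent_triple_of_polar_ne_zero (ellipticForm_eq_zero_of_mem hu)
      (ellipticForm_eq_zero_of_mem hv) (ellipticForm_eq_zero_of_mem hw)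
      (hpolar hu hv huv) (hpolar hu hw huw) (hpolar hv hw hvw)

end Field

/-- For q > 2 a prime power and a ∈ GF(q) with x² + x + a having no root
in GF(q), the set V = {(0,0,1,0)} ∪ {(x, y, x²+xy+ay², 1) : x, y ∈ GF(q)} consists of
q²+1 pairwise non-proportional vectors in GF(q)⁴, any three distinct of which are
linearly independent; hence V spans an ovoid (the elliptic quadric) in PG(3,q). -/
theorem elliptic_quadric_is_ovoid {q : ℕ} (F : Type) [Field F] [Fintype F]
    (hF : Fintype.card F = q) (hq : 2 < q)
    (a : F) (ha : ∀ x : F, x ^ 2 + x + a ≠ 0) :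
    let V : Set (Fin 4 → F) :=
      insert ![0, 0, 1, 0] {w | ∃ x y : F, w = ![x, y, x ^ 2 + x * y + a * y ^ 2, 1]}
    V.ncard = q ^ 2 + 1 ∧
    (∀ u ∈ V, ∀ v ∈ V, u ≠ v → ∀ c : F, v ≠ c • u) ∧
    (∀ u ∈ V, ∀ v ∈ V, ∀ w ∈ V, u ≠ v → u ≠ w → v ≠ w →
      LinearIndependent F ![u, v, w]) := by
  obtain ⟨hcard, hindep⟩ := elliptic_quadric_is_ovoid_general ha
  have hcard' : (ellipticQuadric a).encard = (q ^ 2 + 1 : ℕ) := by simpa [hF] using hcard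
  exact ⟨congrArg ENat.toNat hcard', hindep⟩
end
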